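/- (Lemma 2.5.) Let (x₀, y₀) ∈ 𝓔, i.e. there exists a nonempty bounded open set Ω ⊆ ℝ² having the ε-cone property for some ε > 0 with x₀ = |Ω|·λ₁(Ω) and y₀ = |Ω|·μ₁(Ω). Then the whole horizontal half-line { (x, y₀) : x ≥ x₀ } is contained in the closure of 𝓔. -/

import Mathlib

open MeasureTheory Filter Set Real RealInnerProductSpace

noncomputable section

abbrev E2 : Type := EuclideanSpace ℝ (Fin 2)

/-- First Dirichlet eigenvalue, variational characterization. -/
noncomputable def dEig1 (Ω : Set E2) : ℝ :=
  sInf { R : ℝ | ∃ u : E2 → ℝ, ContDiff ℝ (⊤ : ℕ∞) u ∧ HasCompactSupport u ∧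
    tsupport u ⊆ Ω ∧ (∫ x, (u x)^2) ≠ 0 ∧
    R = (∫ x, ‖fderiv ℝ u x‖^2) / (∫ x, (u x)^2) }

/-- First nontrivial Neumann eigenvalue, variational characterization. -/
noncomputable def nEig1 (Ω : Set E2) : ℝ :=
  sInf { R : ℝ | ∃ u : E2 → ℝ, ContDiff ℝ (⊤ : ℕ∞) u ∧ (∫ x in Ω, u x) = 0 ∧
    (∫ x in Ω, (u x)^2) ≠ 0 ∧
    R = (∫ x in Ω, ‖fderiv ℝ u x‖^2) / (∫ x in Ω, (u x)^2) }

/-- The cone C(y, ξ, ε). -/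
def coneSet (y ξ : E2) (ε : ℝ) : Set E2 :=
  { z | Real.cos ε * ‖z - y‖ ≤ ⟪z - y, ξ⟫ ∧ 0 < ‖z - y‖ ∧ ‖z - y‖ < ε }

/-- The uniform ε-cone property. -/
def ConeProperty (Ω : Set E2) (ε : ℝ) : Prop :=
  ∀ x ∈ frontier Ω, ∃ ξ : E2, ‖ξ‖ = 1 ∧
    ∀ y ∈ closure Ω ∩ Metric.ball x ε, coneSet y ξ ε ⊆ Ω

/-- The Blaschke–Santaló diagram 𝓔 for general (cone-property, i.e. Lipschitz) open sets. -/
def diagE : Set (ℝ × ℝ) :=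
  { p | ∃ Ω : Set E2, Ω.Nonempty ∧ IsOpen Ω ∧ Bornology.IsBounded Ω ∧
      (∃ ε > 0, ConeProperty Ω ε) ∧
      p = ((volume Ω).toReal * dEig1 Ω, (volume Ω).toReal * nEig1 Ω) }

/-- The open unit disc in the plane. -/
def unitDisc : Set E2 := Metric.ball 0 1

open scoped ENNReal NNReal Pointwise

/-!
Remove from `Ω` the closed discs of radius `r` around the centres of a maximal packing of `Ω` by
discs of radius `R`. When `r / R` is a fixed small ratio, no point away from the boundary is far
from a hole, so `λ₁` blows up as `R → 0`; for a fixed packing `λ₁` returns to its original value as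
`r → 0`, and it has no jumps in between because a diffeomorphism close to the identity shrinks all
holes simultaneously. Hence every value above `λ₁(Ω)` is approximately attained.

The Neumann eigenvalue hardly changes meanwhile. Since little area is removed, `μ₁` cannot increase
by much. For the lower bound a test function is extended into each hole: among the `K` dyadic
annuli between the hole and the packing disc one carries at most `1 / K` of the energy, and cutting
off to a constant there changes the energy by a factor `1 + O(1 / K)` and the function by `O(R)`
times the energy norm.
-/

section Integrals

variable {α F : Type*} [MeasurableSpace α] {μ : Measure α} [NormedAddCommGroup F]

lemma sq_lintegral_mul_le {f g : α → ℝ≥0∞} (hf : AEMeasurable f μ) (hg : AEMeasurable g μ) :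
    (∫⁻ x, f x * g x ∂μ) ^ 2 ≤ (∫⁻ x, f x ^ 2 ∂μ) * ∫⁻ x, g x ^ 2 ∂μ := by
  have holder := ENNReal.lintegral_mul_le_Lp_mul_Lq μ Real.HolderConjugate.two_two hf hg
  calc (∫⁻ x, f x * g x ∂μ) ^ 2
      ≤ ((∫⁻ x, f x ^ (2 : ℝ) ∂μ) ^ (1 / (2 : ℝ)) *
          (∫⁻ x, g x ^ (2 : ℝ) ∂μ) ^ (1 / (2 : ℝ))) ^ 2 := pow_le_pow_left' holder 2
    _ = _ := by
      rw [mul_pow, ← ENNReal.rpow_natCast, ← ENNReal.rpow_natCast, ← ENNReal.rpow_mul,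
        ← ENNReal.rpow_mul]
      norm_num

lemma sq_lintegral_le_measure_univ_mul {f : α → ℝ≥0∞} (hf : AEMeasurable f μ) :
    (∫⁻ x, f x ∂μ) ^ 2 ≤ μ univ * ∫⁻ x, f x ^ 2 ∂μ := by
  simpa using sq_lintegral_mul_le (μ := μ) (f := fun _ => 1) aemeasurable_const hf

lemma ofReal_norm_sq (a : F) : ENNReal.ofReal (‖a‖ ^ 2) = ‖a‖ₑ ^ 2 := by
  rw [ENNReal.ofReal_pow (norm_nonneg a), ofReal_norm]

lemma enorm_add_sq_le (a b : F) : ‖a + b‖ₑ ^ 2 ≤ 2 * (‖a‖ₑ ^ 2 + ‖b‖ₑ ^ 2) := by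
  rw [← ofReal_norm_sq, ← ofReal_norm_sq, ← ofReal_norm_sq, ← ENNReal.ofReal_add (sq_nonneg _)
    (sq_nonneg _), ← ENNReal.ofReal_ofNat, ← ENNReal.ofReal_mul zero_le_two]
  exact ENNReal.ofReal_le_ofReal ((pow_le_pow_left₀ (norm_nonneg _) (norm_add_le a b) 2).trans
    add_sq_le)

lemma integral_norm_sq_eq_toReal {f : α → F} (hf : AEStronglyMeasurable f μ) :
    ∫ x, ‖f x‖ ^ 2 ∂μ = (∫⁻ x, ‖f x‖ₑ ^ 2 ∂μ).toReal := by
  rw [integral_eq_lintegral_of_nonneg_ae (Eventually.of_forall fun x => sq_nonneg _)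
    (hf.norm.pow 2)]
  simp_rw [ofReal_norm_sq]

lemma integral_sq_eq_toReal {f : α → ℝ} (hf : AEStronglyMeasurable f μ) :
    ∫ x, f x ^ 2 ∂μ = (∫⁻ x, ‖f x‖ₑ ^ 2 ∂μ).toReal := by
  simpa using integral_norm_sq_eq_toReal hf

lemma lintegral_enorm_sq_ne_top {f : α → F} (hf : Integrable (fun x => ‖f x‖ ^ 2) μ) :
    ∫⁻ x, ‖f x‖ₑ ^ 2 ∂μ ≠ ⊤ := by
  simpa [enorm_pow] using hf.hasFiniteIntegral.ne

lemma integral_sub_average_sq [IsFiniteMeasure μ] {f : α → ℝ} (hf : Integrable f μ)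
    (hf2 : Integrable (fun x => f x ^ 2) μ) :
    ∫ x, (f x - ⨍ y, f y ∂μ) ^ 2 ∂μ =
      ∫ x, f x ^ 2 ∂μ - (∫ x, f x ∂μ) ^ 2 / μ.real univ := by
  rcases eq_or_ne μ 0 with rfl | hμ
  · simp
  have hμ_pos : μ.real univ ≠ 0 := by simpa [measureReal_eq_zero_iff] using hμ
  set c := ⨍ y, f y ∂μ with hc
  have expand : ∀ x, (f x - c) ^ 2 = f x ^ 2 - 2 * c * f x + c ^ 2 := fun x => by ring
  have hlin : Integrable (fun x => f x ^ 2 - 2 * c * f x) μ := hf2.sub (hf.const_mul _)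
  simp_rw [expand]
  rw [integral_add hlin (integrable_const _),
    integral_sub hf2 (hf.const_mul _), integral_const_mul, integral_const, hc, average_eq]
  simp only [smul_eq_mul]
  field_simp
  ring

lemma enorm_sub_sq_le_lintegral_deriv [NormedSpace ℝ F] [CompleteSpace F] {f f' : ℝ → F}
    {a b : ℝ} (hf : ∀ t ∈ Icc a b, HasDerivAt f (f' t) t) (hf' : ContinuousOn f' (Icc a b))
    (hab : a ≤ b) :
    ‖f b - f a‖ₑ ^ 2 ≤ ENNReal.ofReal (b - a) * ∫⁻ t in Ioo a b, ‖f' t‖ₑ ^ 2 := by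
  rw [← uIcc_of_le hab] at hf hf'
  have ftc : f b - f a = ∫ t in Ioo a b, f' t := by
    rw [← intervalIntegral.integral_eq_sub_of_hasDerivAt hf hf'.intervalIntegrable,
      intervalIntegral.integral_of_le hab, integral_Ioc_eq_integral_Ioo]
  have hmeas : AEMeasurable (fun t => ‖f' t‖ₑ) (volume.restrict (Ioo a b)) :=
    ((hf'.mono (by rw [uIcc_of_le hab]; exact Ioo_subset_Icc_self)).aestronglyMeasurable
      measurableSet_Ioo).enorm
  calc ‖f b - f a‖ₑ ^ 2 ≤ (∫⁻ t in Ioo a b, ‖f' t‖ₑ) ^ 2 := by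
        rw [ftc]; gcongr; exact enorm_integral_le_lintegral_enorm _
    _ ≤ _ := by simpa using sq_lintegral_le_measure_univ_mul hmeas

end Integrals

section BoundedSets

variable {X : Type*} [MetricSpace X] [MeasurableSpace X] [BorelSpace X] {μ : Measure X}
  [IsFiniteMeasureOnCompacts μ]

lemma integrable_norm_sq_of_hasCompactSupport {F : Type*} [NormedAddCommGroup F] {f : X → F}
    (hf : Continuous f) (hc : HasCompactSupport f) : Integrable (fun x => ‖f x‖ ^ 2) μ := by
  have hcont : Continuous fun x => ‖f x‖ ^ 2 := hf.norm.pow 2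
  exact hcont.integrable_of_hasCompactSupport (hc.comp_left (g := fun y => ‖y‖ ^ 2) (by simp))

variable [ProperSpace X]

lemma integrableOn_of_continuous_of_isBounded {F : Type*} [NormedAddCommGroup F] {s : Set X}
    (hs : Bornology.IsBounded s) {f : X → F} (hf : Continuous f) : IntegrableOn f s μ :=
  (hf.continuousOn.integrableOn_compact hs.isCompact_closure).mono_set subset_closure

lemma exists_measure_boundaryLayer_le {Ω : Set X} (hΩ : IsOpen Ω) (hb : Bornology.IsBounded Ω)
    {η : ℝ} (hη : 0 < η) :
    ∃ R₀ > 0, ∀ R, 0 < R → R ≤ R₀ →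
      μ (Ω \ {x | Metric.closedBall x R ⊆ Ω}) ≤ ENNReal.ofReal η := by
  have : IsFiniteMeasure (μ.restrict Ω) := ⟨by simpa using hb.measure_lt_top⟩
  have hlim := tendsto_measure_cthickening_of_isClosed (μ := μ.restrict Ω)
    ⟨1, one_pos, measure_ne_top _ _⟩ hΩ.isClosed_compl
  have hnull : μ.restrict Ω Ωᶜ = 0 := by
    rw [Measure.restrict_apply hΩ.measurableSet.compl]; simp
  rw [hnull] at hlim
  obtain ⟨R₀, hR₀, hsmall⟩ :=
    Metric.eventually_nhds_iff.1 (hlim.eventually (gt_mem_nhds (ENNReal.ofReal_pos.2 hη)))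
  refine ⟨R₀ / 2, by positivity, fun R hR hRR₀ => ?_⟩
  have hcollar := hsmall (y := R) (by rw [dist_zero_right, norm_eq_abs, abs_of_pos hR]; linarith)
  rw [Measure.restrict_apply Metric.isClosed_cthickening.measurableSet] at hcollar
  refine (measure_mono ?_).trans hcollar.le
  rintro x ⟨hxΩ, hx⟩
  obtain ⟨y, hxy, hy⟩ := not_subset.1 hx
  exact ⟨Metric.mem_cthickening_of_dist_le x y R _ hy (by rw [dist_comm]; exact hxy), hxΩ⟩

end BoundedSets

section SmoothFunctions

variable {E F : Type*} [NormedAddCommGroup E] [NormedSpace ℝ E] [NormedAddCommGroup F]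
  [NormedSpace ℝ F] {u : E → F}

lemma hasDerivAt_comp_add_smul (hu : Differentiable ℝ u) (x h : E) (t : ℝ) :
    HasDerivAt (fun t : ℝ => u (x + t • h)) (fderiv ℝ u (x + t • h) h) t := by
  have hline : HasDerivAt (fun t : ℝ => x + t • h) h t := by
    simpa using ((hasDerivAt_id t).smul_const h).const_add x
  exact (hu _).hasFDerivAt.comp_hasDerivAt t hline

lemma norm_fderiv_comp_smul (hu : Differentiable ℝ u) (s : ℝ) (x : E) :
    ‖fderiv ℝ (fun y => u (s • y)) x‖ = |s| * ‖fderiv ℝ u (s • x)‖ := by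
  have hcomp : HasFDerivAt (fun y => u (s • y))
      ((fderiv ℝ u (s • x)).comp (s • ContinuousLinearMap.id ℝ E)) x :=
    (hu _).hasFDerivAt.comp x ((hasFDerivAt_id x).const_smul s)
  rw [hcomp.fderiv, ContinuousLinearMap.comp_smul, ContinuousLinearMap.comp_id, norm_smul,
    norm_eq_abs]

variable [CompleteSpace F] [MeasurableSpace E] [BorelSpace E] [FiniteDimensional ℝ E]
  {μ : Measure E} [μ.IsAddHaarMeasure]

lemma lintegral_enorm_translate_sub_sq_le (hu : ContDiff ℝ 1 u) (h : E) :
    ∫⁻ x, ‖u (x + h) - u x‖ₑ ^ 2 ∂μ ≤ ‖h‖ₑ ^ 2 * ∫⁻ x, ‖fderiv ℝ u x‖ₑ ^ 2 ∂μ := by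
  have hgrad : Continuous (fderiv ℝ u) := hu.continuous_fderiv (by simp)
  have hgrad_line : Continuous fun z : E × ℝ => ‖fderiv ℝ u (z.1 + z.2 • h)‖ₑ ^ 2 :=
    (ENNReal.continuous_pow 2).comp (hgrad.comp (by fun_prop)).enorm
  have pointwise : ∀ x, ‖u (x + h) - u x‖ₑ ^ 2 ≤
      ∫⁻ t in Ioo (0 : ℝ) 1, ‖h‖ₑ ^ 2 * ‖fderiv ℝ u (x + t • h)‖ₑ ^ 2 := by
    intro x
    have h01 := enorm_sub_sq_le_lintegral_deriv
      (fun t _ => hasDerivAt_comp_add_smul (hu.differentiable (by simp)) x h t)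
      ((hgrad.comp (by fun_prop)).clm_apply continuous_const).continuousOn zero_le_one
    simp only [one_smul, zero_smul, add_zero, sub_zero, ENNReal.ofReal_one, one_mul] at h01
    refine h01.trans (lintegral_mono fun t => ?_)
    rw [← mul_pow, mul_comm]
    gcongr
    exact ContinuousLinearMap.le_opENorm _ _
  calc ∫⁻ x, ‖u (x + h) - u x‖ₑ ^ 2 ∂μ
      ≤ ∫⁻ x, (∫⁻ t in Ioo (0 : ℝ) 1, ‖h‖ₑ ^ 2 * ‖fderiv ℝ u (x + t • h)‖ₑ ^ 2) ∂μ :=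
        lintegral_mono pointwise
    _ = ∫⁻ t in Ioo (0 : ℝ) 1, ∫⁻ x, ‖h‖ₑ ^ 2 * ‖fderiv ℝ u (x + t • h)‖ₑ ^ 2 ∂μ :=
        lintegral_lintegral_swap (hgrad_line.measurable.const_mul _).aemeasurable
    _ = ∫⁻ _ in Ioo (0 : ℝ) 1, ‖h‖ₑ ^ 2 * ∫⁻ x, ‖fderiv ℝ u x‖ₑ ^ 2 ∂μ := by
        refine lintegral_congr fun t => ?_
        rw [lintegral_const_mul' _ _ (by finiteness),
          lintegral_add_right_eq_self (fun x => ‖fderiv ℝ u x‖ₑ ^ 2) (t • h)]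
    _ = _ := by simp

end SmoothFunctions

section Eigenvalues

variable {Ω : Set E2} {u : E2 → ℝ}

lemma volumeReal_pos_of_isOpen (hΩ : IsOpen Ω) (hne : Ω.Nonempty) (hb : Bornology.IsBounded Ω) :
    0 < volume.real Ω :=
  ENNReal.toReal_pos (hΩ.measure_pos volume hne).ne' hb.measure_lt_top.ne

/-- The Rayleigh quotients of which `dEig1 Ω` is the infimum. -/
def dirichletQuotients (Ω : Set E2) : Set ℝ :=
  { R : ℝ | ∃ u : E2 → ℝ, ContDiff ℝ (⊤ : ℕ∞) u ∧ HasCompactSupport u ∧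
    tsupport u ⊆ Ω ∧ (∫ x, u x ^ 2) ≠ 0 ∧
    R = (∫ x, ‖fderiv ℝ u x‖ ^ 2) / (∫ x, u x ^ 2) }

/-- The Rayleigh quotients of which `nEig1 Ω` is the infimum. -/
def neumannQuotients (Ω : Set E2) : Set ℝ :=
  { R : ℝ | ∃ u : E2 → ℝ, ContDiff ℝ (⊤ : ℕ∞) u ∧ (∫ x in Ω, u x) = 0 ∧
    (∫ x in Ω, u x ^ 2) ≠ 0 ∧
    R = (∫ x in Ω, ‖fderiv ℝ u x‖ ^ 2) / (∫ x in Ω, u x ^ 2) }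

lemma dEig1_eq_sInf (Ω : Set E2) : dEig1 Ω = sInf (dirichletQuotients Ω) := rfl

lemma nEig1_eq_sInf (Ω : Set E2) : nEig1 Ω = sInf (neumannQuotients Ω) := rfl

lemma nonneg_of_mem_dirichletQuotients {R : ℝ} (h : R ∈ dirichletQuotients Ω) : 0 ≤ R := by
  obtain ⟨u, -, -, -, -, rfl⟩ := h
  positivity

lemma nonneg_of_mem_neumannQuotients {R : ℝ} (h : R ∈ neumannQuotients Ω) : 0 ≤ R := by
  obtain ⟨u, -, -, -, rfl⟩ := h
  positivity

lemma dEig1_nonneg (Ω : Set E2) : 0 ≤ dEig1 Ω :=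
  Real.sInf_nonneg fun _ => nonneg_of_mem_dirichletQuotients

lemma nEig1_nonneg (Ω : Set E2) : 0 ≤ nEig1 Ω :=
  Real.sInf_nonneg fun _ => nonneg_of_mem_neumannQuotients

lemma dEig1_mul_le (hu : ContDiff ℝ (⊤ : ℕ∞) u) (hc : HasCompactSupport u) (hs : tsupport u ⊆ Ω) :
    dEig1 Ω * (∫ x, u x ^ 2) ≤ ∫ x, ‖fderiv ℝ u x‖ ^ 2 := by
  have hu_nonneg : 0 ≤ ∫ x, u x ^ 2 := integral_nonneg fun _ => sq_nonneg _
  rcases hu_nonneg.eq_or_lt with hu_zero | hu_pos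
  · rw [← hu_zero, mul_zero]; positivity
  · rw [← le_div_iff₀ hu_pos]
    exact csInf_le ⟨0, fun _ => nonneg_of_mem_dirichletQuotients⟩ ⟨u, hu, hc, hs, hu_pos.ne', rfl⟩

lemma nEig1_mul_le (hu : ContDiff ℝ (⊤ : ℕ∞) u) (hmean : ∫ x in Ω, u x = 0) :
    nEig1 Ω * (∫ x in Ω, u x ^ 2) ≤ ∫ x in Ω, ‖fderiv ℝ u x‖ ^ 2 := by
  have hu_nonneg : 0 ≤ ∫ x in Ω, u x ^ 2 := integral_nonneg fun _ => sq_nonneg _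
  rcases hu_nonneg.eq_or_lt with hu_zero | hu_pos
  · rw [← hu_zero, mul_zero]; positivity
  · rw [← le_div_iff₀ hu_pos]
    exact csInf_le ⟨0, fun _ => nonneg_of_mem_neumannQuotients⟩ ⟨u, hu, hmean, hu_pos.ne', rfl⟩

lemma nEig1_mul_variance_le (hb : Bornology.IsBounded Ω) (hu : ContDiff ℝ (⊤ : ℕ∞) u) :
    nEig1 Ω * ((∫ x in Ω, u x ^ 2) - (∫ x in Ω, u x) ^ 2 / volume.real Ω) ≤
      ∫ x in Ω, ‖fderiv ℝ u x‖ ^ 2 := by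
  have : IsFiniteMeasure (volume.restrict Ω) := ⟨by simpa using hb.measure_lt_top⟩
  have hvar := integral_sub_average_sq (μ := volume.restrict Ω)
    (integrableOn_of_continuous_of_isBounded hb hu.continuous)
    (integrableOn_of_continuous_of_isBounded hb (hu.continuous.pow 2))
  have hray := nEig1_mul_le (Ω := Ω) (hu.sub contDiff_const)
    (integral_sub_average (volume.restrict Ω) u)
  rw [measureReal_restrict_apply_univ] at hvar
  simpa only [hvar, fderiv_sub_const] using hray

lemma dirichletQuotients_nonempty (hΩ : IsOpen Ω) (hne : Ω.Nonempty) :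
    (dirichletQuotients Ω).Nonempty := by
  obtain ⟨p, hp⟩ := hne
  obtain ⟨f, hsupp, hcomp, hsmooth, -, hfp⟩ :=
    exists_contDiff_tsupport_subset (E := E2) (n := (⊤ : ℕ∞)) (hΩ.mem_nhds hp)
  have hcont : Continuous fun x => f x ^ 2 := hsmooth.continuous.pow 2
  have hpos : 0 < ∫ x, f x ^ 2 := by
    apply hcont.integral_pos_of_hasCompactSupport_nonneg_nonzero (x := p)
    · exact hcomp.comp_left (g := fun y : ℝ => y ^ 2) (by simp)
    · exact fun x => sq_nonneg (f x)
    · simp [hfp]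
  exact ⟨_, f, hsmooth, hcomp, hsupp, hpos.ne', rfl⟩

lemma setIntegral_sq_pos (hΩ : IsOpen Ω) (hb : Bornology.IsBounded Ω) (hu : Continuous u)
    (hne : ∃ x ∈ Ω, u x ≠ 0) : 0 < ∫ x in Ω, u x ^ 2 := by
  rw [setIntegral_pos_iff_support_of_nonneg_ae (Eventually.of_forall fun x => sq_nonneg (u x))
    (integrableOn_of_continuous_of_isBounded hb (hu.pow 2)), Function.support_pow _ two_ne_zero]
  obtain ⟨x, hxΩ, hx⟩ := hne
  exact (hu.isOpen_support.inter hΩ).measure_pos volume ⟨x, hx, hxΩ⟩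

lemma neumannQuotients_nonempty (hΩ : IsOpen Ω) (hne : Ω.Nonempty) (hb : Bornology.IsBounded Ω) :
    (neumannQuotients Ω).Nonempty := by
  have : IsFiniteMeasure (volume.restrict Ω) := ⟨by simpa using hb.measure_lt_top⟩
  set c := ⨍ x in Ω, x 0
  refine ⟨_, fun x => x 0 - c, by fun_prop, integral_sub_average _ _,
    (setIntegral_sq_pos hΩ hb (by fun_prop) ?_).ne', rfl⟩
  obtain ⟨p, hp⟩ := hne
  by_cases hpc : p 0 - c = 0
  · obtain ⟨δ, hδ, hball⟩ := Metric.isOpen_iff.1 hΩ p hp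
    refine ⟨p + EuclideanSpace.single 0 (δ / 2), hball ?_, ?_⟩
    · simp [dist_eq_norm, abs_of_pos hδ, hδ]
    · have hcoord : (p + EuclideanSpace.single 0 (δ / 2) : E2) 0 - c = δ / 2 := by
        simp only [PiLp.add_apply, PiLp.single_apply, if_true]; linarith
      rw [hcoord]; positivity
  · exact ⟨p, hp, hpc⟩

lemma le_dEig1 (hΩ : IsOpen Ω) (hne : Ω.Nonempty) {M : ℝ}
    (h : ∀ u : E2 → ℝ, ContDiff ℝ (⊤ : ℕ∞) u → HasCompactSupport u → tsupport u ⊆ Ω →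
      M * (∫ x, u x ^ 2) ≤ ∫ x, ‖fderiv ℝ u x‖ ^ 2) : M ≤ dEig1 Ω := by
  refine le_csInf (dirichletQuotients_nonempty hΩ hne) ?_
  rintro R ⟨u, hu, hc, hs, hu_ne, rfl⟩
  have hu_pos : 0 < ∫ x, u x ^ 2 := (integral_nonneg fun _ => sq_nonneg _).lt_of_ne' hu_ne
  rw [le_div_iff₀ hu_pos]
  exact h u hu hc hs

lemma le_nEig1 (hΩ : IsOpen Ω) (hne : Ω.Nonempty) (hb : Bornology.IsBounded Ω) {M : ℝ}
    (h : ∀ u : E2 → ℝ, ContDiff ℝ (⊤ : ℕ∞) u → ∫ x in Ω, u x = 0 →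
      M * (∫ x in Ω, u x ^ 2) ≤ ∫ x in Ω, ‖fderiv ℝ u x‖ ^ 2) : M ≤ nEig1 Ω := by
  refine le_csInf (neumannQuotients_nonempty hΩ hne hb) ?_
  rintro R ⟨u, hu, hmean, hu_ne, rfl⟩
  have hu_pos : 0 < ∫ x in Ω, u x ^ 2 := (integral_nonneg fun _ => sq_nonneg _).lt_of_ne' hu_ne
  rw [le_div_iff₀ hu_pos]
  exact h u hu hmean

end Eigenvalues

section Dilation

variable {Ω : Set E2} {t : ℝ}

lemma div_sq_mem_dirichletQuotients_smul (ht : 0 < t) {R : ℝ} (hR : R ∈ dirichletQuotients Ω) :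
    R / t ^ 2 ∈ dirichletQuotients (t • Ω) := by
  obtain ⟨u, hu, hc, hs, hu_ne, rfl⟩ := hR
  have scale : ∀ f : E2 → ℝ, ∫ x, f (t⁻¹ • x) = t ^ 2 * ∫ x, f x := fun f => by
    simp [Measure.integral_comp_smul]
  refine ⟨fun y => u (t⁻¹ • y), hu.comp (contDiff_const_smul _),
    hc.comp_smul (inv_ne_zero ht.ne'), ?_, ?_, ?_⟩
  · refine (tsupport_comp_subset_preimage u (continuous_const_smul t⁻¹)).trans fun y hy => ?_
    rw [mem_smul_set_iff_inv_smul_mem₀ ht.ne']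
    exact hs hy
  · rw [scale fun x => u x ^ 2]
    positivity
  · simp_rw [norm_fderiv_comp_smul (hu.differentiable (by simp)), mul_pow, sq_abs]
    rw [integral_const_mul, scale fun x => u x ^ 2, scale fun x => ‖fderiv ℝ u x‖ ^ 2]
    field_simp

lemma div_sq_mem_neumannQuotients_smul (ht : 0 < t) {R : ℝ} (hR : R ∈ neumannQuotients Ω) :
    R / t ^ 2 ∈ neumannQuotients (t • Ω) := by
  obtain ⟨u, hu, hmean, hu_ne, rfl⟩ := hR
  have scale : ∀ f : E2 → ℝ, ∫ x in t • Ω, f (t⁻¹ • x) = t ^ 2 * ∫ x in Ω, f x := fun f => by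
    rw [Measure.setIntegral_comp_smul volume f _ (inv_ne_zero ht.ne'), inv_smul_smul₀ ht.ne']
    simp
  refine ⟨fun y => u (t⁻¹ • y), hu.comp (contDiff_const_smul _), by rw [scale, hmean, mul_zero],
    ?_, ?_⟩
  · rw [scale fun x => u x ^ 2]
    positivity
  · simp_rw [norm_fderiv_comp_smul (hu.differentiable (by simp)), mul_pow, sq_abs]
    rw [integral_const_mul, scale fun x => u x ^ 2, scale fun x => ‖fderiv ℝ u x‖ ^ 2]
    field_simp

lemma smul_set_eq_of_div_sq_mem {Q : Set E2 → Set ℝ}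
    (hQ : ∀ {Ω : Set E2} {t : ℝ}, 0 < t → ∀ {R}, R ∈ Q Ω → R / t ^ 2 ∈ Q (t • Ω)) (ht : 0 < t) :
    Q (t • Ω) = (t ^ 2)⁻¹ • Q Ω := by
  refine Subset.antisymm (fun R hR => ?_) ?_
  · have hback := hQ (inv_pos.2 ht) hR
    rw [inv_smul_smul₀ ht.ne'] at hback
    exact ⟨_, hback, by simp; field_simp⟩
  · rintro _ ⟨R, hR, rfl⟩
    simpa [div_eq_inv_mul] using hQ ht hR

lemma volumeReal_smul (Ω : Set E2) (t : ℝ) : volume.real (t • Ω) = t ^ 2 * volume.real Ω := by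
  simp [measureReal_def, ENNReal.toReal_ofReal (sq_nonneg t)]

lemma volumeReal_smul_mul_dEig1 (ht : 0 < t) :
    volume.real (t • Ω) * dEig1 (t • Ω) = volume.real Ω * dEig1 Ω := by
  rw [dEig1_eq_sInf,
    smul_set_eq_of_div_sq_mem (Q := dirichletQuotients) div_sq_mem_dirichletQuotients_smul ht,
    Real.sInf_smul_of_nonneg (by positivity), volumeReal_smul, dEig1_eq_sInf]
  simp only [smul_eq_mul]
  field_simp

lemma volumeReal_smul_mul_nEig1 (ht : 0 < t) :
    volume.real (t • Ω) * nEig1 (t • Ω) = volume.real Ω * nEig1 Ω := by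
  rw [nEig1_eq_sInf,
    smul_set_eq_of_div_sq_mem (Q := neumannQuotients) div_sq_mem_neumannQuotients_smul ht,
    Real.sInf_smul_of_nonneg (by positivity), volumeReal_smul, nEig1_eq_sInf]
  simp only [smul_eq_mul]
  field_simp

end Dilation

section Perforation

variable {X : Type*} [MetricSpace X] {Ω : Set X} {P : Finset X} {r R : ℝ} {x y : X}

/-- The set `Ω` with the closed balls of radius `r` around the points of `P` removed. -/
def perforate (Ω : Set X) (P : Finset X) (r : ℝ) : Set X := Ω \ ⋃ p ∈ P, Metric.closedBall p r

/-- The points of `P` are the centres of disjoint closed balls of radius `R` contained in `Ω`.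
Disjointness is expressed through the distances of the centres. -/
structure IsBallPacking (Ω : Set X) (P : Finset X) (R : ℝ) : Prop where
  closedBall_subset : ∀ p ∈ P, Metric.closedBall p R ⊆ Ω
  two_mul_lt_dist : ∀ p ∈ P, ∀ q ∈ P, p ≠ q → 2 * R < dist p q

lemma mem_perforate : x ∈ perforate Ω P r ↔ x ∈ Ω ∧ ∀ p ∈ P, r < dist x p := by
  simp [perforate]

lemma perforate_subset (Ω : Set X) (P : Finset X) (r : ℝ) : perforate Ω P r ⊆ Ω := sdiff_subset

lemma isOpen_perforate (hΩ : IsOpen Ω) (P : Finset X) (r : ℝ) : IsOpen (perforate Ω P r) :=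
  hΩ.sdiff (isClosed_biUnion_finset fun _ _ => Metric.isClosed_closedBall)

lemma le_dist_of_mem_closure_perforate (hx : x ∈ closure (perforate Ω P r)) {p : X} (hp : p ∈ P) :
    r ≤ dist x p :=
  closure_minimal (fun _ hz => ((mem_perforate.1 hz).2 p hp).le)
    (isClosed_le continuous_const (continuous_id.dist continuous_const)) hx

lemma IsBallPacking.lt_dist (hP : IsBallPacking Ω P R) {p q : X} (hp : p ∈ P) (hq : q ∈ P)
    (hpq : q ≠ p) (hx : dist x p ≤ R) : R < dist x q := by
  linarith [hP.two_mul_lt_dist p hp q hq hpq.symm, dist_triangle_left p q x]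

lemma IsBallPacking.lt_dist_of_near_compl (hP : IsBallPacking Ω P R) (hx : x ∉ Ω)
    (hyx : dist y x ≤ R - r) {p : X} (hp : p ∈ P) : r < dist y p := by
  by_contra! hyp
  refine hx (hP.closedBall_subset p hp ?_)
  rw [Metric.mem_closedBall]
  linarith [dist_triangle_left x p y]

end Perforation

section Cones

variable {F : Type*} [NormedAddCommGroup F] [InnerProductSpace ℝ F] {Ω : Set F} {c c' l l' : ℝ}

/-- The uniform cone property with the aperture of the cones (of cosine `c`) decoupled from
their length `l`; `ConeProperty Ω ε` is the case `c = cos ε`, `l = ε`. -/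
def UniformCones (Ω : Set F) (c l : ℝ) : Prop :=
  ∀ x ∈ frontier Ω, ∃ ξ : F, ‖ξ‖ = 1 ∧ ∀ y ∈ closure Ω ∩ Metric.ball x l, ∀ w : F,
    c * ‖w‖ ≤ ⟪w, ξ⟫ → 0 < ‖w‖ → ‖w‖ < l → y + w ∈ Ω

lemma UniformCones.mono (h : UniformCones Ω c l) (hc : c ≤ c') (hl : l' ≤ l) :
    UniformCones Ω c' l' := by
  intro x hx
  obtain ⟨ξ, hξ, hcone⟩ := h x hx
  refine ⟨ξ, hξ, fun y hy w hwξ hw hwl => ?_⟩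
  exact hcone y ⟨hy.1, Metric.ball_subset_ball hl hy.2⟩ w
    ((mul_le_mul_of_nonneg_right hc hw.le).trans hwξ) hw (hwl.trans_le hl)

lemma UniformCones.smul (h : UniformCones Ω c l) {t : ℝ} (ht : 0 < t) :
    UniformCones (t • Ω) c (t * l) := by
  have hfrontier : frontier (t • Ω) = t • frontier Ω :=
    ((Homeomorph.smulOfNeZero t ht.ne').image_frontier Ω).symm
  rw [UniformCones, hfrontier, closure_smul₀]
  rintro _ ⟨x, hx, rfl⟩
  obtain ⟨ξ, hξ, hcone⟩ := h x hx
  refine ⟨ξ, hξ, ?_⟩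
  rintro _ ⟨⟨y, hy, rfl⟩, hyx⟩ w hwξ hw hwl
  simp only [Metric.mem_ball, dist_smul₀, norm_eq_abs, abs_of_pos ht] at hyx
  have hnorm : ‖t⁻¹ • w‖ = t⁻¹ * ‖w‖ := norm_smul_of_nonneg (by positivity) w
  refine ⟨y + t⁻¹ • w, hcone y ⟨hy, lt_of_mul_lt_mul_left hyx ht.le⟩ _ ?_ ?_ ?_, ?_⟩
  · rw [hnorm, real_inner_smul_left, mul_left_comm]
    gcongr
  · rw [hnorm]; positivity
  · rwa [hnorm, inv_mul_lt_iff₀ ht]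
  · simp [smul_inv_smul₀ ht.ne']

lemma norm_lt_norm_add_of_inner_nonneg {v w : F} (h : 0 ≤ ⟪v, w⟫) (hw : 0 < ‖w‖) :
    ‖v‖ < ‖v + w‖ := by
  refine lt_of_pow_lt_pow_left₀ 2 (norm_nonneg _) ?_
  rw [norm_add_sq_real]
  nlinarith

variable {P : Finset F} {r R : ℝ} {x y w : F}

lemma inner_sub_nonneg_of_mem_cone {p : F} (hw : r * (c * ‖w‖) ≤ ⟪w, x - p⟫)
    (hyx : ‖y - x‖ ≤ r * c) : 0 ≤ ⟪y - p, w⟫ := by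
  have hsplit : ⟪y - p, w⟫ = ⟪w, x - p⟫ + ⟪y - x, w⟫ := by
    rw [real_inner_comm (x - p) w, ← inner_add_left]
    congr 1; abel
  have hcs := neg_le_of_abs_le (abs_real_inner_le_norm (y - x) w)
  have := mul_le_mul_of_nonneg_right hyx (norm_nonneg w)
  linarith

-- The radial direction serves as the axis of the cones along the boundary of a hole.
lemma IsBallPacking.add_mem_perforate_of_near_hole (hP : IsBallPacking Ω P R) {p : F} (hp : p ∈ P)
    (hxp : dist x p = r) (hrR : r < R) (hy : y ∈ closure (perforate Ω P r))
    (hyx : dist y x < l) (hl : 2 * l ≤ R - r) (hlc : l ≤ r * c)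
    (hwx : r * (c * ‖w‖) ≤ ⟪w, x - p⟫) (hw : 0 < ‖w‖) (hwl : ‖w‖ < l) :
    y + w ∈ perforate Ω P r := by
  have hnear : dist (y + w) p ≤ R := by
    have := dist_triangle4 (y + w) y x p
    rw [dist_self_add_left] at this
    linarith
  refine mem_perforate.2 ⟨hP.closedBall_subset p hp hnear, fun q hq => ?_⟩
  rcases eq_or_ne q p with rfl | hqp
  · rw [dist_eq_norm] at hyx
    refine (le_dist_of_mem_closure_perforate hy hp).trans_lt ?_
    rw [dist_eq_norm, dist_eq_norm, add_sub_right_comm]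
    exact norm_lt_norm_add_of_inner_nonneg
      (inner_sub_nonneg_of_mem_cone hwx (hyx.le.trans hlc)) hw
  · exact hrR.trans (hP.lt_dist hp hq hqp hnear)

lemma UniformCones.perforate (h : UniformCones Ω c l) (hΩ : IsOpen Ω) (hP : IsBallPacking Ω P R)
    (hr : 0 < r) (hrR : r < R) (hl' : l' ≤ l) (hl'R : 2 * l' ≤ R - r) (hl'c : l' ≤ r * c) :
    UniformCones (perforate Ω P r) c l' := by
  have hclosure := closure_mono (perforate_subset Ω P r)
  intro x hx
  obtain ⟨hx_closure, hx_notMem⟩ := (isOpen_perforate hΩ P r).frontier_eq ▸ hx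
  by_cases hxΩ : x ∈ Ω
  · obtain ⟨p, hp, hxp⟩ : ∃ p ∈ P, dist x p ≤ r := by
      by_contra! hfar
      exact hx_notMem (mem_perforate.2 ⟨hxΩ, hfar⟩)
    replace hxp : dist x p = r := hxp.antisymm (le_dist_of_mem_closure_perforate hx_closure hp)
    refine ⟨r⁻¹ • (x - p), ?_, fun y hy w hwξ hw hwl => ?_⟩
    · rw [norm_smul_of_nonneg (by positivity), ← dist_eq_norm, hxp, inv_mul_cancel₀ hr.ne']
    · rw [real_inner_smul_right, le_inv_mul_iff₀ hr] at hwξ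
      exact hP.add_mem_perforate_of_near_hole hp hxp hrR hy.1 hy.2 hl'R hl'c hwξ hw hwl
  · obtain ⟨ξ, hξ, hcone⟩ := h x (hΩ.frontier_eq ▸ ⟨hclosure hx_closure, hxΩ⟩)
    refine ⟨ξ, hξ, fun y hy w hwξ hw hwl => mem_perforate.2 ⟨?_, fun p hp => ?_⟩⟩
    · exact hcone y ⟨hclosure hy.1, Metric.ball_subset_ball hl' hy.2⟩ w hwξ hw (hwl.trans_le hl')
    · refine hP.lt_dist_of_near_compl hxΩ ?_ hp
      have := dist_triangle (y + w) y x
      rw [dist_self_add_left] at this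
      linarith [Metric.mem_ball.1 hy.2]

end Cones

section Diagram

variable {Ω : Set E2} {ε l : ℝ}

lemma coneProperty_iff_uniformCones : ConeProperty Ω ε ↔ UniformCones Ω (cos ε) ε := by
  refine forall₂_congr fun x _ => exists_congr fun ξ => and_congr_right fun _ =>
    forall₂_congr fun y _ => ?_
  refine ⟨fun h w hwξ hw hwε => h (by simpa [coneSet] using ⟨hwξ, norm_pos_iff.1 hw, hwε⟩), ?_⟩
  rintro h z ⟨hzξ, hz, hzε⟩
  simpa using h (z - y) hzξ hz hzε

lemma exists_uniformCones_of_coneProperty (hε : 0 < ε) (h : ConeProperty Ω ε) :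
    ∃ ε' > 0, 0 < cos ε' ∧ UniformCones Ω (cos ε') ε' := by
  have hcones := coneProperty_iff_uniformCones.1 h
  rcases lt_or_ge 0 (cos ε) with hcos | hcos
  · exact ⟨ε, hε, hcos, hcones⟩
  · have hpi : π / 3 ≤ ε := by
      by_contra! hlt
      have : 0 < cos ε := cos_pos_of_mem_Ioo ⟨by linarith [pi_pos], by linarith [pi_pos]⟩
      linarith
    have hcos_third : 0 < cos (π / 3) := by rw [cos_pi_div_three]; norm_num
    exact ⟨π / 3, by positivity, hcos_third, hcones.mono (hcos.trans hcos_third.le) hpi⟩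

lemma mem_diagE_of_uniformCones (hΩ : IsOpen Ω) (hne : Ω.Nonempty) (hb : Bornology.IsBounded Ω)
    (hε : 0 < ε) (hl : 0 < l) (h : UniformCones Ω (cos ε) l) :
    (volume.real Ω * dEig1 Ω, volume.real Ω * nEig1 Ω) ∈ diagE := by
  have ht : 0 < ε / l := by positivity
  have hcones : ConeProperty ((ε / l) • Ω) ε := by
    rw [coneProperty_iff_uniformCones]
    simpa [div_mul_cancel₀ _ hl.ne'] using h.smul ht
  refine ⟨(ε / l) • Ω, hne.smul_set, hΩ.smul₀ ht.ne', hb.smul₀ _, ⟨ε, hε, hcones⟩, ?_⟩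
  rw [← volumeReal_smul_mul_dEig1 ht, ← volumeReal_smul_mul_nEig1 ht]
  rfl

lemma IsBallPacking.perforate_mem_diagE {P : Finset E2} {r R : ℝ} (hP : IsBallPacking Ω P R)
    (hΩ : IsOpen Ω) (hb : Bornology.IsBounded Ω) (hne : (perforate Ω P r).Nonempty)
    (hcone : ∃ ε > 0, ConeProperty Ω ε) (hr : 0 < r) (hrR : r < R) :
    (volume.real (perforate Ω P r) * dEig1 (perforate Ω P r),
      volume.real (perforate Ω P r) * nEig1 (perforate Ω P r)) ∈ diagE := by
  obtain ⟨ε₀, hε₀, hcone⟩ := hcone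
  obtain ⟨ε, hε, hcos, hcones⟩ := exists_uniformCones_of_coneProperty hε₀ hcone
  obtain ⟨l, hl, hlε, hlR, hlr⟩ : ∃ l > 0, l ≤ ε ∧ l ≤ (R - r) / 2 ∧ l ≤ r * cos ε :=
    ⟨min ε (min ((R - r) / 2) (r * cos ε)),
      lt_min hε (lt_min (by linarith) (by positivity)), by simp, by simp, by simp⟩
  exact mem_diagE_of_uniformCones (isOpen_perforate hΩ P r) hne (hb.subset (perforate_subset _ _ _))
    hε hl (hcones.perforate hΩ hP hr hrR hlε (by linarith) hlr)

end Diagram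

section Packing

variable {X : Type*} [MetricSpace X] [ProperSpace X] {Ω : Set X}

lemma finite_maximalSeparatedSet {A : Set X} (hA : Bornology.IsBounded A) {ε : ℝ≥0} (hε : ε ≠ 0) :
    (Metric.maximalSeparatedSet (2 * ε) A).Finite ∧ Metric.packingNumber (2 * ε) A ≠ ⊤ := by
  obtain ⟨N, -, hN_finite, hN⟩ := Metric.exists_finite_isCover_of_totallyBounded hε
    (hA.isCompact_closure.totallyBounded.subset subset_closure)
  have hpack : Metric.packingNumber (2 * ε) A ≠ ⊤ :=
    ((Metric.packingNumber_two_mul_le_externalCoveringNumber ε A).trans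
      hN.externalCoveringNumber_le_encard).trans_lt (Set.encard_lt_top_iff.2 hN_finite) |>.ne
  refine ⟨?_, hpack⟩
  rwa [← Set.encard_ne_top_iff, Metric.encard_maximalSeparatedSet hpack]

lemma exists_maximal_ballPacking (hΩ : Bornology.IsBounded Ω) {R : ℝ} (hR : 0 < R) :
    ∃ P : Finset X, IsBallPacking Ω P R ∧
      ∀ x, Metric.closedBall x R ⊆ Ω → ∃ p ∈ P, dist x p ≤ 2 * R := by
  set A : Set X := {x | Metric.closedBall x R ⊆ Ω}
  have hA : Bornology.IsBounded A := hΩ.subset fun x hx => hx (Metric.mem_closedBall_self hR.le)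
  lift R to ℝ≥0 using hR.le
  obtain ⟨hfinite, hpack⟩ := finite_maximalSeparatedSet hA (NNReal.coe_pos.1 hR).ne'
  refine ⟨hfinite.toFinset, ⟨fun p hp => ?_, fun p hp q hq hpq => ?_⟩, fun x hx => ?_⟩
  · exact Metric.maximalSeparatedSet_subset (hfinite.mem_toFinset.1 hp)
  · have hsep : ((2 * R : ℝ≥0) : ℝ≥0∞) < edist p q := Metric.isSeparated_maximalSeparatedSet
      (hfinite.mem_toFinset.1 hp) (hfinite.mem_toFinset.1 hq) hpq
    rw [edist_nndist, ENNReal.coe_lt_coe] at hsep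
    exact_mod_cast hsep
  · obtain ⟨p, hp, hpx⟩ := Metric.isCover_maximalSeparatedSet hpack (show x ∈ A from hx)
    have hpx : edist x p ≤ (2 * R : ℝ≥0) := hpx
    rw [edist_le_coe] at hpx
    exact ⟨p, hfinite.mem_toFinset.2 hp, by exact_mod_cast hpx⟩

end Packing

section FunctionalInequalities

variable {E : Type*} [NormedAddCommGroup E] {u : E → ℝ}

lemma enorm_fderiv_sq [NormedSpace ℝ E] (hu : Differentiable ℝ u) (x : E) :
    ‖fderiv ℝ (fun y => u y ^ 2) x‖ₑ = 2 * (‖u x‖ₑ * ‖fderiv ℝ u x‖ₑ) := by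
  have htwo : ‖(2 : ℝ)‖ₑ = 2 := by rw [← ofReal_norm]; norm_num
  rw [((hu x).hasFDerivAt.pow 2).fderiv]
  simp [enorm_smul, enorm_mul, mul_assoc, htwo]

variable [MeasurableSpace E] [BorelSpace E] {μ : Measure E} [μ.IsAddHaarMeasure]

lemma lintegral_enorm_sq_ne_top_of_hasCompactSupport {F : Type*} [NormedAddCommGroup F] {f : E → F}
    (hf : Continuous f) (hc : HasCompactSupport f) : ∫⁻ x, ‖f x‖ₑ ^ 2 ∂μ ≠ ⊤ :=
  lintegral_enorm_sq_ne_top (integrable_norm_sq_of_hasCompactSupport hf hc)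

lemma measure_closedBall_mul_enorm_sq_le {r D : ℝ} {p x : E}
    (hball : Metric.closedBall p r ⊆ Metric.closedBall x D)
    (hzero : ∀ y ∈ Metric.closedBall p r, u y = 0) :
    μ (Metric.closedBall 0 r) * ‖u x‖ₑ ^ 2 ≤
      ∫⁻ h in Metric.closedBall 0 D, ‖u (x + h) - u x‖ₑ ^ 2 ∂μ := by
  have hshift : ∀ h, dist h (p - x) = dist (x + h) p := fun h => by
    rw [dist_eq_norm, dist_eq_norm]; congr 1; abel
  calc μ (Metric.closedBall 0 r) * ‖u x‖ₑ ^ 2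
      = ∫⁻ _ in Metric.closedBall (p - x) r, ‖u x‖ₑ ^ 2 ∂μ := by
        rw [setLIntegral_const, mul_comm, Measure.addHaar_closedBall_center μ (p - x)]
    _ = ∫⁻ h in Metric.closedBall (p - x) r, ‖u (x + h) - u x‖ₑ ^ 2 ∂μ := by
        refine setLIntegral_congr_fun measurableSet_closedBall fun h hh => ?_
        rw [hzero (x + h) (by rwa [Metric.mem_closedBall, ← hshift]), zero_sub, enorm_neg]
    _ ≤ _ := by
        refine lintegral_mono_set fun h hh => ?_
        have := hball (show x + h ∈ Metric.closedBall p r by rwa [Metric.mem_closedBall, ← hshift])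
        simpa using this

variable [NormedSpace ℝ E] [FiniteDimensional ℝ E]

-- Every translation by a vector of norm at most `D` moves `u` by at most `D * ‖∇u‖` in `L²`, and
-- a proportion of these translations carries a given point of `G` to a zero of `u`.
lemma measure_closedBall_mul_setLIntegral_enorm_sq_le (hu : ContDiff ℝ 1 u) {G : Set E} {r D : ℝ}
    (hG : ∀ x ∈ G, ∃ p, Metric.closedBall p r ⊆ Metric.closedBall x D ∧
      ∀ y ∈ Metric.closedBall p r, u y = 0) :
    μ (Metric.closedBall 0 r) * ∫⁻ x in G, ‖u x‖ₑ ^ 2 ∂μ ≤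
      μ (Metric.closedBall 0 D) * (ENNReal.ofReal D ^ 2 * ∫⁻ x, ‖fderiv ℝ u x‖ₑ ^ 2 ∂μ) := by
  set B := Metric.closedBall (0 : E) D
  have hmeas : Measurable fun z : E × E => ‖u (z.1 + z.2) - u z.1‖ₑ ^ 2 := by
    have : Continuous fun z : E × E => ‖u (z.1 + z.2) - u z.1‖ₑ :=
      ((hu.continuous.comp (by fun_prop)).sub (hu.continuous.comp (by fun_prop))).enorm
    exact this.measurable.pow_const 2
  calc μ (Metric.closedBall 0 r) * ∫⁻ x in G, ‖u x‖ₑ ^ 2 ∂μ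
      = ∫⁻ x in G, μ (Metric.closedBall 0 r) * ‖u x‖ₑ ^ 2 ∂μ :=
        (lintegral_const_mul _ (hu.continuous.enorm.measurable.pow_const 2)).symm
    _ ≤ ∫⁻ x in G, (∫⁻ h in B, ‖u (x + h) - u x‖ₑ ^ 2 ∂μ) ∂μ := by
        refine setLIntegral_mono hmeas.lintegral_prod_right' fun x hx => ?_
        obtain ⟨p, hball, hzero⟩ := hG x hx
        exact measure_closedBall_mul_enorm_sq_le hball hzero
    _ ≤ ∫⁻ x, (∫⁻ h in B, ‖u (x + h) - u x‖ₑ ^ 2 ∂μ) ∂μ := setLIntegral_le_lintegral _ _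
    _ = ∫⁻ h in B, (∫⁻ x, ‖u (x + h) - u x‖ₑ ^ 2 ∂μ) ∂μ :=
        lintegral_lintegral_swap hmeas.aemeasurable
    _ ≤ ∫⁻ _ in B, ENNReal.ofReal D ^ 2 * ∫⁻ x, ‖fderiv ℝ u x‖ₑ ^ 2 ∂μ ∂μ := by
        refine setLIntegral_mono measurable_const fun h hh => ?_
        refine (lintegral_enorm_translate_sub_sq_le hu h).trans ?_
        rw [← ofReal_norm]
        gcongr
        simpa [B] using hh
    _ = _ := by rw [setLIntegral_const, mul_comm]

lemma setLIntegral_enorm_sq_le_of_zero_on_balls (hu : ContDiff ℝ 1 u) {G : Set E} {r D : ℝ}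
    (hr : 0 < r) (hD : 0 ≤ D) (hG : ∀ x ∈ G, ∃ p, Metric.closedBall p r ⊆ Metric.closedBall x D ∧
      ∀ y ∈ Metric.closedBall p r, u y = 0) :
    ∫⁻ x in G, ‖u x‖ₑ ^ 2 ∂μ ≤
      ENNReal.ofReal ((D / r) ^ Module.finrank ℝ E * D ^ 2) * ∫⁻ x, ‖fderiv ℝ u x‖ₑ ^ 2 ∂μ := by
  have hball : μ (Metric.closedBall (0 : E) D) =
      μ (Metric.closedBall 0 r) * ENNReal.ofReal ((D / r) ^ Module.finrank ℝ E) := by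
    rw [Measure.addHaar_closedBall _ _ hD, Measure.addHaar_closedBall _ _ hr.le, mul_right_comm,
      ← ENNReal.ofReal_mul (by positivity), ← mul_pow, mul_div_cancel₀ _ hr.ne']
  have hr_pos : μ (Metric.closedBall (0 : E) r) ≠ 0 := (Metric.measure_closedBall_pos _ _ hr).ne'
  rw [← ENNReal.mul_le_mul_iff_right hr_pos measure_closedBall_lt_top.ne,
    ENNReal.ofReal_mul (by positivity), ENNReal.ofReal_pow hD, mul_assoc, ← mul_assoc (μ _),
    ← hball]
  exact measure_closedBall_mul_setLIntegral_enorm_sq_le hu hG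

-- Ladyzhenskaya's inequality, from the Gagliardo–Nirenberg–Sobolev inequality for `u ^ 2`.
lemma exists_lintegral_enorm_pow_four_le (hE : Module.finrank ℝ E = 2) (μ : Measure E)
    [μ.IsAddHaarMeasure] :
    ∃ C : ℝ≥0, ∀ u : E → ℝ, ContDiff ℝ 1 u → HasCompactSupport u →
      ∫⁻ x, (‖u x‖ₑ ^ 2) ^ 2 ∂μ ≤
        C * ((∫⁻ x, ‖u x‖ₑ ^ 2 ∂μ) * ∫⁻ x, ‖fderiv ℝ u x‖ₑ ^ 2 ∂μ) := by
  refine ⟨lintegralPowLePowLIntegralFDerivConst μ 2 * 2 ^ 2, fun u hu hc => ?_⟩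
  have hmeas : AEMeasurable (fun x => ‖u x‖ₑ) μ := hu.continuous.enorm.measurable.aemeasurable
  have hmeas' : AEMeasurable (fun x => ‖fderiv ℝ u x‖ₑ) μ :=
    (hu.continuous_fderiv (by simp)).enorm.measurable.aemeasurable
  have gns := lintegral_pow_le_pow_lintegral_fderiv μ (u := fun x => u x ^ 2) (hu.pow 2)
    (hc.comp_left (g := fun y : ℝ => y ^ 2) (by simp)) (by rw [hE]; exact .two_two)
  simp_rw [enorm_fderiv_sq (hu.differentiable (by simp)), enorm_pow, ENNReal.rpow_two] at gns
  rw [lintegral_const_mul' _ _ (by finiteness), mul_pow] at gns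
  refine gns.trans ?_
  rw [ENNReal.coe_mul, mul_assoc]
  push_cast
  gcongr
  exact sq_lintegral_mul_le hmeas hmeas'

end FunctionalInequalities

section DirichletLarge

variable {Ω : Set E2} {P : Finset E2} {u : E2 → ℝ} {r R : ℝ}

lemma eq_zero_of_mem_hole (hs : tsupport u ⊆ perforate Ω P r) {p x : E2} (hp : p ∈ P)
    (hx : x ∈ Metric.closedBall p r) : u x = 0 := by
  by_contra hux
  exact ((mem_perforate.1 (hs (subset_tsupport u hux))).2 p hp).not_ge hx

lemma setLIntegral_inner_enorm_sq_le (hu : ContDiff ℝ 1 u) (hs : tsupport u ⊆ perforate Ω P r)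
    (hr : 0 < r) (hrR : r ≤ R)
    (hcover : ∀ x, Metric.closedBall x R ⊆ Ω → ∃ p ∈ P, dist x p ≤ 2 * R) :
    ∫⁻ x in {x | Metric.closedBall x R ⊆ Ω}, ‖u x‖ₑ ^ 2 ≤
      ENNReal.ofReal (81 * R ^ 4 / r ^ 2) * ∫⁻ x, ‖fderiv ℝ u x‖ₑ ^ 2 := by
  have hball : ∀ x, Metric.closedBall x R ⊆ Ω → ∃ p,
      Metric.closedBall p r ⊆ Metric.closedBall x (3 * R) ∧
        ∀ y ∈ Metric.closedBall p r, u y = 0 := by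
    intro x hx
    obtain ⟨p, hp, hxp⟩ := hcover x hx
    refine ⟨p, Metric.closedBall_subset_closedBall' ?_, fun y => eq_zero_of_mem_hole hs hp⟩
    rw [dist_comm]
    linarith
  have hconst : (3 * R / r) ^ 2 * (3 * R) ^ 2 = 81 * R ^ 4 / r ^ 2 := by ring
  have hpoincare := setLIntegral_enorm_sq_le_of_zero_on_balls (μ := volume) hu hr
    (by linarith : 0 ≤ 3 * R) hball
  rwa [finrank_euclideanSpace_fin, hconst] at hpoincare

lemma mul_le_of_absorb {W E g b a τ M : ℝ} (hE : 0 ≤ E) (ha : 0 ≤ a) (hτ : 0 ≤ τ)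
    (hW : 0 ≤ W) (hsplit : W ≤ g + b) (hg : g ≤ a * E) (hb : b ^ 2 ≤ τ * (W * E))
    (haM : a * M ≤ 1 / 2) (hτM : τ * M ≤ 1 / 16) : M * W ≤ E := by
  by_contra! hEM
  have hgW : g ≤ W / 2 := by nlinarith [mul_le_mul_of_nonneg_left hEM.le ha]
  have hbW : b ≤ W / 4 := by
    refine le_of_sq_le_sq (hb.trans ?_) (by positivity)
    nlinarith [mul_le_mul_of_nonneg_left hEM.le (mul_nonneg hτ hW),
      mul_le_mul_of_nonneg_right hτM (mul_nonneg hW hW)]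
  have hW_zero : W = 0 := by linarith
  rw [hW_zero, mul_zero] at hEM
  linarith

lemma lintegral_le_setLIntegral_inner_add_collar (hs : Function.support u ⊆ Ω) (R : ℝ) :
    ∫⁻ x, ‖u x‖ₑ ^ 2 ≤ (∫⁻ x in {x | Metric.closedBall x R ⊆ Ω}, ‖u x‖ₑ ^ 2) +
      ∫⁻ x in Ω \ {x | Metric.closedBall x R ⊆ Ω}, ‖u x‖ₑ ^ 2 := by
  set G := {x | Metric.closedBall x R ⊆ Ω}
  rw [← setLIntegral_eq_of_support_subset (s := G ∪ Ω \ G)]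
  · exact lintegral_union_le _ _ _
  · intro x hx
    have hxΩ : x ∈ Ω := hs fun hux => hx (by simp [hux])
    exact (em (x ∈ G)).imp_right fun hxG => ⟨hxΩ, hxG⟩

lemma mul_integral_sq_le_of_small_collar {η M : ℝ} {C : ℝ≥0} (hu : ContDiff ℝ 1 u)
    (hc : HasCompactSupport u) (hs : tsupport u ⊆ perforate Ω P r)
    (hu4 : ∫⁻ x, (‖u x‖ₑ ^ 2) ^ 2 ≤ C * ((∫⁻ x, ‖u x‖ₑ ^ 2) * ∫⁻ x, ‖fderiv ℝ u x‖ₑ ^ 2))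
    (hr : 0 < r) (hrR : r ≤ R) (hη : 0 ≤ η)
    (hcover : ∀ x, Metric.closedBall x R ⊆ Ω → ∃ p ∈ P, dist x p ≤ 2 * R)
    (hcollar : volume (Ω \ {x | Metric.closedBall x R ⊆ Ω}) ≤ ENNReal.ofReal η)
    (hRM : 81 * R ^ 4 / r ^ 2 * M ≤ 1 / 2) (hηM : η * C * M ≤ 1 / 16) :
    M * ∫ x, u x ^ 2 ≤ ∫ x, ‖fderiv ℝ u x‖ ^ 2 := by
  have hgrad : Continuous (fderiv ℝ u) := hu.continuous_fderiv (by simp)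
  have hW := lintegral_enorm_sq_ne_top_of_hasCompactSupport (μ := volume) hu.continuous hc
  have hE := lintegral_enorm_sq_ne_top_of_hasCompactSupport (μ := volume) hgrad (hc.fderiv ℝ)
  set G := {x | Metric.closedBall x R ⊆ Ω}
  have hfinite : ∀ s : Set E2, ∫⁻ x in s, ‖u x‖ₑ ^ 2 ≠ ⊤ := fun s =>
    ne_top_of_le_ne_top hW (setLIntegral_le_lintegral _ _)
  have hinner := setLIntegral_inner_enorm_sq_le hu hs hr hrR hcover
  have hsplit := lintegral_le_setLIntegral_inner_add_collar
    ((subset_tsupport u).trans (hs.trans (perforate_subset Ω P r))) R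
  have hbad : (∫⁻ x in Ω \ G, ‖u x‖ₑ ^ 2) ^ 2 ≤
      ENNReal.ofReal η * (C * ((∫⁻ x, ‖u x‖ₑ ^ 2) * ∫⁻ x, ‖fderiv ℝ u x‖ₑ ^ 2)) := by
    refine (sq_lintegral_le_measure_univ_mul
      (hu.continuous.enorm.measurable.pow_const 2).aemeasurable).trans ?_
    rw [Measure.restrict_apply_univ]
    exact mul_le_mul' hcollar ((setLIntegral_le_lintegral _ _).trans hu4)
  have hsplit' := ENNReal.toReal_mono (ENNReal.add_ne_top.2 ⟨hfinite _, hfinite _⟩) hsplit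
  have hinner' := ENNReal.toReal_mono (by finiteness) hinner
  have hbad' := ENNReal.toReal_mono (by finiteness) hbad
  rw [ENNReal.toReal_add (hfinite _) (hfinite _)] at hsplit'
  rw [ENNReal.toReal_mul, ENNReal.toReal_ofReal (by positivity)] at hinner'
  rw [ENNReal.toReal_pow, ENNReal.toReal_mul, ENNReal.toReal_mul, ENNReal.toReal_mul,
    ENNReal.toReal_ofReal hη, ENNReal.coe_toReal, ← mul_assoc] at hbad'
  rw [integral_sq_eq_toReal hu.continuous.aestronglyMeasurable,
    integral_norm_sq_eq_toReal hgrad.aestronglyMeasurable]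
  exact mul_le_of_absorb ENNReal.toReal_nonneg (by positivity) (by positivity)
    ENNReal.toReal_nonneg hsplit' hinner' hbad' hRM hηM

lemma exists_le_dEig1_perforate (hΩ : IsOpen Ω) (hb : Bornology.IsBounded Ω) {κ : ℝ} (hκ : 0 < κ)
    (hκ_le : κ ≤ 1) (M : ℝ) :
    ∃ R₀ > 0, ∀ R, 0 < R → R ≤ R₀ → ∀ P : Finset E2,
      (∀ x, Metric.closedBall x R ⊆ Ω → ∃ p ∈ P, dist x p ≤ 2 * R) →
      (perforate Ω P (κ * R)).Nonempty → M ≤ dEig1 (perforate Ω P (κ * R)) := by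
  wlog hM : 1 ≤ M generalizing M
  · obtain ⟨R₀, hR₀, h⟩ := this (max M 1) (le_max_right _ _)
    exact ⟨R₀, hR₀, fun R hR hRR₀ P hcover hne =>
      (le_max_left _ _).trans (h R hR hRR₀ P hcover hne)⟩
  obtain ⟨C, hC⟩ := exists_lintegral_enorm_pow_four_le (E := E2) (by simp) volume
  obtain ⟨R₁, hR₁, hcollar⟩ := exists_measure_boundaryLayer_le (μ := volume) hΩ hb
    (η := 1 / (16 * (C + 1) * M)) (by positivity)
  refine ⟨min R₁ (κ / (13 * M)), by positivity, fun R hR hRR₀ P hcover hne => ?_⟩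
  obtain ⟨hRR₁, hRκ⟩ := le_min_iff.1 hRR₀
  refine le_dEig1 (isOpen_perforate hΩ _ _) hne fun u hu hc hs =>
    mul_integral_sq_le_of_small_collar (hu.of_le (by simp)) hc hs (hC u (hu.of_le (by simp)) hc)
      (by positivity) (mul_le_of_le_one_left hR.le hκ_le) (by positivity) hcover
      (hcollar R hR hRR₁) ?_ ?_
  · have hRκ' : R / κ ≤ 1 / (13 * M) := by
      rwa [div_le_iff₀ hκ, one_div, inv_mul_eq_div]
    calc 81 * R ^ 4 / (κ * R) ^ 2 * M = 81 * (R / κ) ^ 2 * M := by field_simp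
      _ ≤ 81 * (1 / (13 * M)) ^ 2 * M := by gcongr
      _ = 81 / 169 * (1 / M) := by field_simp; norm_num
      _ ≤ 1 / 2 := by linarith [(div_le_one (by linarith)).2 hM]
  · have hC_ratio : (C / (C + 1) : ℝ) ≤ 1 := (div_le_one (by positivity)).2 (by linarith)
    calc 1 / (16 * (C + 1) * M) * C * M = (C / (C + 1) : ℝ) / 16 := by field_simp
      _ ≤ 1 / 16 := by linarith

end DirichletLarge

section NeumannUpper

variable {Ω Ω' : Set E2} {u : E2 → ℝ}

lemma nEig1_mul_le_of_removal (hb : Bornology.IsBounded Ω) (hΩ' : IsOpen Ω') (hsub : Ω' ⊆ Ω)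
    (hu : ContDiff ℝ (⊤ : ℕ∞) u) (hmean : ∫ x in Ω, u x = 0) {M : ℝ} (hM : ∀ x ∈ Ω, |u x| ≤ M)
    (hvol : volume.real (Ω \ Ω') ≤ volume.real Ω') :
    nEig1 Ω' * ((∫ x in Ω, u x ^ 2) - 2 * M ^ 2 * volume.real (Ω \ Ω')) ≤
      ∫ x in Ω, ‖fderiv ℝ u x‖ ^ 2 := by
  set η := volume.real (Ω \ Ω')
  have : 0 ≤ η := measureReal_nonneg
  have hfin : volume (Ω \ Ω') < ⊤ := (hb.subset sdiff_subset).measure_lt_top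
  have hsplit {f : E2 → ℝ} (hf : Continuous f) :
      ∫ x in Ω \ Ω', f x = (∫ x in Ω, f x) - ∫ x in Ω', f x :=
    setIntegral_sdiff hΩ'.measurableSet (integrableOn_of_continuous_of_isBounded hb hf) hsub
  have hmean_le : (∫ x in Ω', u x) ^ 2 ≤ (M * η) ^ 2 := by
    have h := norm_setIntegral_le_of_norm_le_const (f := u) hfin fun x hx => hM x hx.1
    rw [hsplit hu.continuous, hmean, zero_sub, norm_neg] at h
    exact sq_le_sq.2 (h.trans (le_abs_self _))
  have hmean_sq_le : (∫ x in Ω', u x) ^ 2 / volume.real Ω' ≤ M ^ 2 * η := by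
    refine div_le_of_le_mul₀ measureReal_nonneg (by positivity) (hmean_le.trans ?_)
    calc (M * η) ^ 2 = M ^ 2 * η * η := by ring
      _ ≤ M ^ 2 * η * volume.real Ω' := by gcongr
  have hmass_le : (∫ x in Ω, u x ^ 2) - ∫ x in Ω', u x ^ 2 ≤ M ^ 2 * η := by
    rw [← hsplit (f := fun x => u x ^ 2) (hu.continuous.pow 2)]
    refine (le_norm_self _).trans (norm_setIntegral_le_of_norm_le_const hfin fun x hx => ?_)
    rw [norm_pow]
    exact pow_le_pow_left₀ (norm_nonneg _) (hM x hx.1) 2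
  calc nEig1 Ω' * ((∫ x in Ω, u x ^ 2) - 2 * M ^ 2 * η)
      ≤ nEig1 Ω' * ((∫ x in Ω', u x ^ 2) - (∫ x in Ω', u x) ^ 2 / volume.real Ω') :=
        mul_le_mul_of_nonneg_left (by linarith) (nEig1_nonneg Ω')
    _ ≤ ∫ x in Ω', ‖fderiv ℝ u x‖ ^ 2 := nEig1_mul_variance_le (hb.subset hsub) hu
    _ ≤ ∫ x in Ω, ‖fderiv ℝ u x‖ ^ 2 := by
        have hgrad : Continuous fun x => ‖fderiv ℝ u x‖ ^ 2 :=
          (hu.continuous_fderiv (by simp)).norm.pow 2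
        exact setIntegral_mono_set (integrableOn_of_continuous_of_isBounded hb hgrad)
          (Eventually.of_forall fun _ => sq_nonneg _) hsub.eventuallyLE

lemma exists_nEig1_le_of_removal (hΩ : IsOpen Ω) (hne : Ω.Nonempty) (hb : Bornology.IsBounded Ω)
    {δ : ℝ} (hδ : 0 < δ) : ∃ η > 0, ∀ Ω' : Set E2, IsOpen Ω' → Ω' ⊆ Ω →
      volume.real (Ω \ Ω') ≤ η → nEig1 Ω' ≤ nEig1 Ω + δ := by
  obtain ⟨_, ⟨u, hu, hmean, hu_ne, rfl⟩, hquot⟩ := exists_lt_of_csInf_lt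
    (neumannQuotients_nonempty hΩ hne hb) (show sInf (neumannQuotients Ω) < nEig1 Ω + δ from
      lt_add_of_pos_right _ hδ)
  set W := ∫ x in Ω, u x ^ 2
  set E := ∫ x in Ω, ‖fderiv ℝ u x‖ ^ 2
  have hW : 0 < W := (integral_nonneg fun _ => sq_nonneg _).lt_of_ne' hu_ne
  obtain ⟨M, hM⟩ := hb.isCompact_closure.exists_bound_of_continuousOn hu.continuous.continuousOn
  have hden : Tendsto (fun η => W - 2 * M ^ 2 * η) (nhds 0) (nhds W) :=
    Continuous.tendsto' (by fun_prop) _ _ (by simp)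
  have hquot_lim : Tendsto (fun η => E / (W - 2 * M ^ 2 * η)) (nhds 0) (nhds (E / W)) :=
    tendsto_const_nhds.div hden hW.ne'
  have hV := volumeReal_pos_of_isOpen hΩ hne hb
  obtain ⟨η, ⟨⟨hη_den, hη_quot⟩, hη_vol⟩, hη⟩ := (((((hden.eventually_const_lt hW).and
    (hquot_lim.eventually_lt_const hquot)).and (eventually_le_nhds (half_pos hV))).filter_mono
      nhdsWithin_le_nhds).and (self_mem_nhdsWithin (s := Ioi (0 : ℝ)))).exists
  refine ⟨η, hη, fun Ω' hΩ' hsub hrem => ?_⟩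
  have hrem_vol := measureReal_sdiff (μ := volume) hsub hΩ'.measurableSet hb.measure_lt_top.ne
  have hbound := nEig1_mul_le_of_removal hb hΩ' hsub hu hmean
    (fun x hx => hM x (subset_closure hx)) (by linarith)
  refine le_trans ?_ hη_quot.le
  rw [le_div_iff₀ hη_den]
  refine le_trans (mul_le_mul_of_nonneg_left ?_ (nEig1_nonneg Ω')) hbound
  gcongr

end NeumannUpper

section Cutoff

variable {E : Type*} [NormedAddCommGroup E] [NormedSpace ℝ E]

lemma norm_sum_sq_eq_of_disjoint {ι F : Type*} [NormedAddCommGroup F] {s : Finset ι} {f : ι → F}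
    (h : ∀ i ∈ s, ∀ j ∈ s, i ≠ j → f i = 0 ∨ f j = 0) :
    ‖∑ i ∈ s, f i‖ ^ 2 = ∑ i ∈ s, ‖f i‖ ^ 2 := by
  by_cases hf : ∃ j ∈ s, f j ≠ 0
  · obtain ⟨j, hj, hfj⟩ := hf
    have hothers : ∀ i ∈ s, i ≠ j → f i = 0 := fun i hi hij => (h i hi j hj hij).resolve_right hfj
    rw [Finset.sum_eq_single_of_mem j hj hothers, Finset.sum_eq_single_of_mem j hj]
    intro i hi hij
    simp [hothers i hi hij]
  · push Not at hf
    rw [Finset.sum_eq_zero hf, Finset.sum_eq_zero fun i hi => by simp [hf i hi]]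
    simp

variable [HasContDiffBump E] {p x : E} {a : ℝ}

/-- A smooth radial plateau at scale `a > 0`: equal to `1` within distance `a` of `p`, and to `0`
beyond distance `2 * a`. All plateaus are rescalings of a single one. -/
def plateau (p : E) (a : ℝ) (x : E) : ℝ :=
  (⟨1, 2, one_pos, one_lt_two⟩ : ContDiffBump (0 : E)) (a⁻¹ • (x - p))

lemma contDiff_plateau (p : E) (a : ℝ) : ContDiff ℝ (⊤ : ℕ∞) (plateau p a) :=
  (ContDiffBump.contDiff _).comp (by fun_prop)

lemma plateau_mem_Icc (p : E) (a : ℝ) (x : E) : plateau p a x ∈ Icc (0 : ℝ) 1 :=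
  ⟨ContDiffBump.nonneg _, ContDiffBump.le_one _⟩

lemma plateau_eq_one (ha : 0 < a) (hx : dist x p ≤ a) : plateau p a x = 1 := by
  apply ContDiffBump.one_of_mem_closedBall
  rw [mem_closedBall_zero_iff, norm_smul, norm_inv, norm_eq_abs, abs_of_pos ha, ← dist_eq_norm]
  exact inv_mul_le_one_of_le₀ hx ha.le

lemma plateau_eq_zero (ha : 0 < a) (hx : 2 * a ≤ dist x p) : plateau p a x = 0 := by
  apply ContDiffBump.zero_of_le_dist
  rwa [dist_zero_right, norm_smul, norm_inv, norm_eq_abs, abs_of_pos ha, ← dist_eq_norm,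
    le_inv_mul_iff₀ ha, mul_comm]

lemma fderiv_plateau_eq_zero_of_dist_le (ha : 0 < a) (hx : dist x p ≤ a) :
    fderiv ℝ (plateau p a) x = 0 :=
  IsLocalMax.fderiv_eq_zero <| Eventually.of_forall fun y => by
    rw [plateau_eq_one ha hx]; exact (plateau_mem_Icc p a y).2

lemma fderiv_plateau_eq_zero_of_le_dist (ha : 0 < a) (hx : 2 * a ≤ dist x p) :
    fderiv ℝ (plateau p a) x = 0 :=
  IsLocalMin.fderiv_eq_zero <| Eventually.of_forall fun y => by
    rw [plateau_eq_zero ha hx]; exact (plateau_mem_Icc p a y).1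

lemma norm_fderiv_plateau (p x : E) (ha : 0 < a) :
    ‖fderiv ℝ (plateau p a) x‖ = ‖fderiv ℝ (plateau (0 : E) 1) (a⁻¹ • (x - p))‖ / a := by
  have hscale : plateau p a = fun y => plateau (0 : E) 1 (a⁻¹ • (y - p)) := by
    ext y; simp [plateau]
  rw [hscale, fderiv_comp_sub (f := fun y => plateau (0 : E) 1 (a⁻¹ • y)) p,
    norm_fderiv_comp_smul ((contDiff_plateau 0 1).differentiable (by simp)), abs_inv,
    abs_of_pos ha, inv_mul_eq_div]

/-- The logarithmic cutoff vanishing near `p` and equal to `1` beyond distance `ρ`, built from `N`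
dyadic plateaus. -/
def logCutoff (p : E) (ρ : ℝ) (N : ℕ) (x : E) : ℝ :=
  1 - (N : ℝ)⁻¹ * ∑ j ∈ Finset.range N, plateau p (ρ / 2 ^ (j + 1)) x

variable {ρ : ℝ} {N : ℕ}

lemma contDiff_logCutoff (p : E) (ρ : ℝ) (N : ℕ) : ContDiff ℝ (⊤ : ℕ∞) (logCutoff p ρ N) :=
  contDiff_const.sub (contDiff_const.mul (ContDiff.sum fun _ _ => contDiff_plateau p _))

lemma logCutoff_mem_Icc (p : E) (ρ : ℝ) (N : ℕ) (x : E) : logCutoff p ρ N x ∈ Icc (0 : ℝ) 1 := by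
  have hnonneg : 0 ≤ ∑ j ∈ Finset.range N, plateau p (ρ / 2 ^ (j + 1)) x :=
    Finset.sum_nonneg fun j _ => (plateau_mem_Icc p _ x).1
  have hle : ∑ j ∈ Finset.range N, plateau p (ρ / 2 ^ (j + 1)) x ≤ N := by
    simpa using Finset.sum_le_card_nsmul (Finset.range N) _ 1 fun j _ => (plateau_mem_Icc p _ x).2
  exact ⟨sub_nonneg.2 (inv_mul_le_one_of_le₀ hle (by positivity)),
    sub_le_self _ (by positivity)⟩

lemma logCutoff_eq_one (hρ : 0 < ρ) (hx : ρ ≤ dist x p) : logCutoff p ρ N x = 1 := by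
  have hzero : ∀ j ∈ Finset.range N, plateau p (ρ / 2 ^ (j + 1)) x = 0 := fun j _ => by
    refine plateau_eq_zero (by positivity) (le_trans ?_ hx)
    rw [pow_succ, ← mul_div_assoc, mul_comm _ (2 : ℝ), mul_div_mul_left _ _ two_ne_zero]
    exact div_le_self hρ.le (one_le_pow₀ one_le_two)
  rw [logCutoff, Finset.sum_eq_zero hzero, mul_zero, sub_zero]

lemma logCutoff_eq_zero (hρ : 0 < ρ) (hN : N ≠ 0) (hx : dist x p ≤ ρ / 2 ^ N) :
    logCutoff p ρ N x = 0 := by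
  have hone : ∀ j ∈ Finset.range N, plateau p (ρ / 2 ^ (j + 1)) x = 1 := fun j hj => by
    refine plateau_eq_one (by positivity) (hx.trans ?_)
    gcongr
    exacts [one_le_two, Finset.mem_range.1 hj]
  rw [logCutoff, Finset.sum_congr rfl hone]
  simp [hN]

lemma fderiv_logCutoff (p : E) (ρ : ℝ) (N : ℕ) (x : E) : fderiv ℝ (logCutoff p ρ N) x =
    -((N : ℝ)⁻¹ • ∑ j ∈ Finset.range N, fderiv ℝ (plateau p (ρ / 2 ^ (j + 1))) x) := by
  have hsum : HasFDerivAt (fun x => ∑ j ∈ Finset.range N, plateau p (ρ / 2 ^ (j + 1)) x)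
      (∑ j ∈ Finset.range N, fderiv ℝ (plateau p (ρ / 2 ^ (j + 1))) x) x :=
    HasFDerivAt.fun_sum fun j _ =>
      ((contDiff_plateau p _).differentiable (by simp) x).hasFDerivAt
  exact ((hsum.const_mul (N : ℝ)⁻¹).const_sub 1).fderiv

lemma norm_fderiv_logCutoff_sq (hρ : 0 < ρ) (p x : E) (N : ℕ) : ‖fderiv ℝ (logCutoff p ρ N) x‖ ^ 2 =
    ((N : ℝ) ^ 2)⁻¹ * ∑ j ∈ Finset.range N, ‖fderiv ℝ (plateau p (ρ / 2 ^ (j + 1))) x‖ ^ 2 := by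
  have hdisj : ∀ i j, i < j → fderiv ℝ (plateau p (ρ / 2 ^ (i + 1))) x = 0 ∨
      fderiv ℝ (plateau p (ρ / 2 ^ (j + 1))) x = 0 := by
    intro i j hij
    rcases le_total (dist x p) (ρ / 2 ^ (i + 1)) with hx | hx
    · exact Or.inl (fderiv_plateau_eq_zero_of_dist_le (by positivity) hx)
    · refine Or.inr (fderiv_plateau_eq_zero_of_le_dist (by positivity) (le_trans ?_ hx))
      rw [pow_succ _ j, ← mul_div_assoc, mul_comm _ (2 : ℝ), mul_div_mul_left _ _ two_ne_zero]
      gcongr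
      exacts [one_le_two, hij]
  rw [fderiv_logCutoff, norm_neg, norm_smul, mul_pow, norm_sum_sq_eq_of_disjoint, norm_inv,
    norm_natCast, inv_pow]
  intro i _ j _ hij
  rcases hij.lt_or_gt with h | h
  · exact hdisj i j h
  · exact (hdisj j i h).symm

variable [FiniteDimensional ℝ E]

lemma hasCompactSupport_plateau (p : E) (ha : 0 < a) : HasCompactSupport (plateau p a) :=
  have : ProperSpace E := FiniteDimensional.proper ℝ E
  HasCompactSupport.intro (isCompact_closedBall p (2 * a)) fun _ hx =>
    plateau_eq_zero ha (not_le.1 hx).le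

lemma exists_norm_fderiv_plateau_le (E : Type*) [NormedAddCommGroup E] [NormedSpace ℝ E]
    [HasContDiffBump E] [FiniteDimensional ℝ E] :
    ∃ L : ℝ, ∀ (p : E) (a : ℝ), 0 < a → ∀ x, ‖fderiv ℝ (plateau p a) x‖ ≤ L / a := by
  obtain ⟨L, hL⟩ := ((contDiff_plateau (0 : E) 1).continuous_fderiv
    (by simp)).bounded_above_of_compact_support ((hasCompactSupport_plateau 0 one_pos).fderiv ℝ)
  refine ⟨L, fun p a ha x => ?_⟩
  rw [norm_fderiv_plateau p x ha]
  gcongr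
  exact hL _

variable [MeasurableSpace E] [BorelSpace E] (μ : Measure E) [μ.IsAddHaarMeasure]

lemma integrable_norm_fderiv_plateau_sq (p : E) (ha : 0 < a) :
    Integrable (fun x => ‖fderiv ℝ (plateau p a) x‖ ^ 2) μ :=
  integrable_norm_sq_of_hasCompactSupport ((contDiff_plateau p a).continuous_fderiv (by simp))
    ((hasCompactSupport_plateau p ha).fderiv ℝ)

lemma integral_norm_fderiv_plateau_sq (hE : Module.finrank ℝ E = 2) (p : E) (ha : 0 < a) :
    ∫ x, ‖fderiv ℝ (plateau p a) x‖ ^ 2 ∂μ = ∫ x, ‖fderiv ℝ (plateau (0 : E) 1) x‖ ^ 2 ∂μ := by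
  simp only [norm_fderiv_plateau p _ ha, div_pow, integral_div]
  rw [integral_sub_right_eq_self (fun x => ‖fderiv ℝ (plateau (0 : E) 1) (a⁻¹ • x)‖ ^ 2) p,
    Measure.integral_comp_inv_smul_of_nonneg μ
      (fun x => ‖fderiv ℝ (plateau (0 : E) 1) x‖ ^ 2) ha.le, hE, smul_eq_mul]
  field_simp

lemma integrable_norm_fderiv_logCutoff_sq (p : E) (hρ : 0 < ρ) (N : ℕ) :
    Integrable (fun x => ‖fderiv ℝ (logCutoff p ρ N) x‖ ^ 2) μ := by
  simp only [norm_fderiv_logCutoff_sq hρ]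
  exact (integrable_finsetSum _ fun j _ =>
    integrable_norm_fderiv_plateau_sq μ p (by positivity)).const_mul _

lemma integral_norm_fderiv_logCutoff_sq (hE : Module.finrank ℝ E = 2) (p : E) (hρ : 0 < ρ) (N : ℕ) :
    ∫ x, ‖fderiv ℝ (logCutoff p ρ N) x‖ ^ 2 ∂μ =
      (∫ x, ‖fderiv ℝ (plateau (0 : E) 1) x‖ ^ 2 ∂μ) / N := by
  simp only [norm_fderiv_logCutoff_sq hρ]
  rw [integral_const_mul, integral_finsetSum _ fun j _ =>
      integrable_norm_fderiv_plateau_sq μ p (by positivity),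
    Finset.sum_congr rfl fun j _ => integral_norm_fderiv_plateau_sq μ hE p (by positivity),
    Finset.sum_const, Finset.card_range, nsmul_eq_mul]
  rcases eq_or_ne N 0 with rfl | hN
  · simp
  · field_simp

-- A point of a plane has zero capacity.
lemma exists_cutoff_energy_le (hE : Module.finrank ℝ E = 2) (p : E) (hρ : 0 < ρ) {ε : ℝ}
    (hε : 0 < ε) : ∃ χ : E → ℝ, ContDiff ℝ (⊤ : ℕ∞) χ ∧ (∀ x, χ x ∈ Icc (0 : ℝ) 1) ∧
      p ∉ tsupport χ ∧ (∀ x, ρ ≤ dist x p → χ x = 1) ∧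
      Integrable (fun x => ‖fderiv ℝ χ x‖ ^ 2) μ ∧ ∫ x, ‖fderiv ℝ χ x‖ ^ 2 ∂μ ≤ ε := by
  obtain ⟨N, hN, hN0⟩ := ((tendsto_const_div_atTop_nhds_zero_nat
    (∫ x, ‖fderiv ℝ (plateau (0 : E) 1) x‖ ^ 2 ∂μ)).eventually_le_const hε).and
      (eventually_ne_atTop 0) |>.exists
  refine ⟨logCutoff p ρ N, contDiff_logCutoff p ρ N, logCutoff_mem_Icc p ρ N, ?_,
    fun x => logCutoff_eq_one hρ, integrable_norm_fderiv_logCutoff_sq μ p hρ N,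
    (integral_norm_fderiv_logCutoff_sq μ hE p hρ N).trans_le hN⟩
  rw [notMem_tsupport_iff_eventuallyEq]
  filter_upwards [Metric.closedBall_mem_nhds p (show 0 < ρ / 2 ^ N by positivity)] with x hx
  exact logCutoff_eq_zero hρ hN0 hx

end Cutoff

section ZeroCapacity

lemma dirichletQuotients_mono {Ω Ω' : Set E2} (h : Ω ⊆ Ω') :
    dirichletQuotients Ω ⊆ dirichletQuotients Ω' := by
  rintro _ ⟨u, hu, hc, hs, hquot⟩
  exact ⟨u, hu, hc, hs.trans h, hquot⟩

section Product

variable {E : Type*} [NormedAddCommGroup E] [NormedSpace ℝ E] {u χ : E → ℝ} {M : ℝ}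

lemma norm_fderiv_mul_sq_le (hu : Differentiable ℝ u) (hχ : Differentiable ℝ χ)
    (hM : ∀ x, |u x| ≤ M) (hχ01 : ∀ x, χ x ∈ Icc (0 : ℝ) 1) {s : ℝ} (hs : 0 < s) (x : E) :
    ‖fderiv ℝ (fun y => χ y * u y) x‖ ^ 2 ≤
      (1 + s) * ‖fderiv ℝ u x‖ ^ 2 + (1 + 1 / s) * M ^ 2 * ‖fderiv ℝ χ x‖ ^ 2 := by
  have hprod : ‖fderiv ℝ (fun y => χ y * u y) x‖ ≤ ‖fderiv ℝ u x‖ + M * ‖fderiv ℝ χ x‖ := by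
    rw [fderiv_fun_mul (hχ x) (hu x)]
    refine (norm_add_le _ _).trans ?_
    rw [norm_smul, norm_smul, norm_of_nonneg (hχ01 x).1]
    gcongr
    · exact mul_le_of_le_one_left (norm_nonneg _) (hχ01 x).2
    · exact hM x
  set A := ‖fderiv ℝ u x‖
  set B := ‖fderiv ℝ χ x‖
  calc _ ≤ (A + M * B) ^ 2 := by gcongr
    _ = (1 + s) * A ^ 2 + (1 + 1 / s) * M ^ 2 * B ^ 2 - (s * A - M * B) ^ 2 / s := by
      field_simp; ring
    _ ≤ _ := sub_le_self _ (by positivity)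

variable [MeasurableSpace E] [BorelSpace E] {μ : Measure E} [IsFiniteMeasureOnCompacts μ]

lemma integral_norm_fderiv_mul_sq_le (hu : ContDiff ℝ 1 u) (hc : HasCompactSupport u)
    (hχ : Differentiable ℝ χ) (hM : ∀ x, |u x| ≤ M) (hχ01 : ∀ x, χ x ∈ Icc (0 : ℝ) 1)
    (hχ_int : Integrable (fun x => ‖fderiv ℝ χ x‖ ^ 2) μ) {s : ℝ} (hs : 0 < s) :
    ∫ x, ‖fderiv ℝ (fun y => χ y * u y) x‖ ^ 2 ∂μ ≤
      (1 + s) * (∫ x, ‖fderiv ℝ u x‖ ^ 2 ∂μ) +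
        (1 + 1 / s) * M ^ 2 * ∫ x, ‖fderiv ℝ χ x‖ ^ 2 ∂μ := by
  have hu_int : Integrable (fun x => ‖fderiv ℝ u x‖ ^ 2) μ :=
    integrable_norm_sq_of_hasCompactSupport (hu.continuous_fderiv (by simp)) (hc.fderiv ℝ)
  rw [← integral_const_mul, ← integral_const_mul,
    ← integral_add (hu_int.const_mul _) (hχ_int.const_mul _)]
  exact integral_mono_of_nonneg (Eventually.of_forall fun x => sq_nonneg _)
    ((hu_int.const_mul _).add (hχ_int.const_mul _))
    (Eventually.of_forall (norm_fderiv_mul_sq_le (hu.differentiable (by simp)) hχ hM hχ01 hs))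

lemma integral_sq_sub_le_integral_mul_sq [FiniteDimensional ℝ E] (hu : Continuous u)
    (hc : HasCompactSupport u) (hχ : Continuous χ) (hM : ∀ x, |u x| ≤ M) {p : E} {ρ : ℝ}
    (hχ1 : ∀ x, ρ ≤ dist x p → χ x = 1) :
    (∫ x, u x ^ 2 ∂μ) - M ^ 2 * μ.real (Metric.closedBall p ρ) ≤ ∫ x, (χ x * u x) ^ 2 ∂μ := by
  have : ProperSpace E := FiniteDimensional.proper ℝ E
  have hsq_int {f : E → ℝ} (hf : Continuous f) (hfc : HasCompactSupport f) :
      Integrable (fun x => f x ^ 2) μ := by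
    simpa only [norm_eq_abs, sq_abs] using integrable_norm_sq_of_hasCompactSupport hf hfc
  have hball_int : Integrable ((Metric.closedBall p ρ).indicator fun _ => M ^ 2) μ :=
    (integrable_indicator_iff measurableSet_closedBall).2
      (integrableOn_const measure_closedBall_lt_top.ne)
  have hball : ∫ x, (Metric.closedBall p ρ).indicator (fun _ => M ^ 2) x ∂μ =
      M ^ 2 * μ.real (Metric.closedBall p ρ) := by
    rw [integral_indicator measurableSet_closedBall, setIntegral_const, smul_eq_mul, mul_comm]
  rw [← hball, ← integral_sub (hsq_int hu hc) hball_int]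
  refine integral_mono ((hsq_int hu hc).sub hball_int) (hsq_int (hχ.mul hu) hc.mul_left) fun x => ?_
  by_cases hx : x ∈ Metric.closedBall p ρ
  · rw [indicator_of_mem hx]
    exact (sub_nonpos.2 (sq_le_sq.2 ((hM x).trans (le_abs_self M)))).trans (sq_nonneg _)
  · rw [indicator_of_notMem hx, hχ1 x (not_le.1 hx).le, one_mul, sub_zero]

end Product

lemma volumeReal_closedBall (p : E2) {r : ℝ} (hr : 0 ≤ r) :
    volume.real (Metric.closedBall p r) = r ^ 2 * volume.real (Metric.closedBall (0 : E2) 1) := by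
  simpa using Measure.addHaar_real_closedBall' volume p hr

lemma exists_dirichletQuotient_punctured_le {Ω : Set E2} {q : ℝ} (hq : q ∈ dirichletQuotients Ω)
    (p : E2) {δ : ℝ} (hδ : 0 < δ) :
    ∃ s > 0, ∃ q' ∈ dirichletQuotients (Ω \ Metric.closedBall p s), q' ≤ q + δ := by
  obtain ⟨u, hu, hc, hsupp, hu_ne, rfl⟩ := hq
  set W := ∫ x, u x ^ 2
  set E := ∫ x, ‖fderiv ℝ u x‖ ^ 2
  have hW : 0 < W := (integral_nonneg fun _ => sq_nonneg _).lt_of_ne' hu_ne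
  obtain ⟨M, hM⟩ := hu.continuous.bounded_above_of_compact_support hc
  set v := volume.real (Metric.closedBall (0 : E2) 1)
  have hden : Tendsto (fun s => W - M ^ 2 * (s ^ 2 * v)) (nhds 0) (nhds W) :=
    Continuous.tendsto' (by fun_prop) _ _ (by simp)
  have hnum : Tendsto (fun s => (1 + s) * E + M ^ 2 * (s ^ 2 + s)) (nhds 0) (nhds E) :=
    Continuous.tendsto' (by fun_prop) _ _ (by simp)
  obtain ⟨s, ⟨hs_den, hs_quot⟩, hs⟩ := ((((hden.eventually_const_lt hW).and
    ((hnum.div hden hW.ne').eventually_lt_const (lt_add_of_pos_right (E / W) hδ))).filter_mono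
      nhdsWithin_le_nhds).and (self_mem_nhdsWithin (s := Ioi (0 : ℝ)))).exists
  replace hs : 0 < s := hs
  obtain ⟨χ, hχ, hχ01, hχp, hχ1, hχ_int, hχ_energy⟩ :=
    exists_cutoff_energy_le volume (by simp) p hs (pow_pos hs 2)
  have henergy :
      ∫ x, ‖fderiv ℝ (fun y => χ y * u y) x‖ ^ 2 ≤ (1 + s) * E + M ^ 2 * (s ^ 2 + s) := by
    refine (integral_norm_fderiv_mul_sq_le (hu.of_le (by simp)) hc (hχ.differentiable (by simp))
      hM hχ01 hχ_int hs).trans ?_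
    calc _ ≤ (1 + s) * E + (1 + 1 / s) * M ^ 2 * s ^ 2 := by gcongr
      _ = _ := by field_simp
  have hmass : W - M ^ 2 * (s ^ 2 * v) ≤ ∫ x, (χ x * u x) ^ 2 := by
    rw [← volumeReal_closedBall p hs.le]
    exact integral_sq_sub_le_integral_mul_sq hu.continuous hc hχ.continuous hM hχ1
  obtain ⟨σ, hσ, hσχ⟩ := Metric.nhds_basis_closedBall.mem_iff.1
    ((isClosed_tsupport χ).isOpen_compl.mem_nhds hχp)
  refine ⟨σ, hσ, _, ⟨fun x => χ x * u x, hχ.mul hu, hc.mul_left, fun x hx => ⟨hsupp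
    (tsupport_mul_subset_right hx), fun hxσ => hσχ hxσ (tsupport_mul_subset_left hx)⟩,
    (hs_den.trans_le hmass).ne', rfl⟩, ?_⟩
  refine le_trans ?_ hs_quot.le
  exact div_le_div₀ ((integral_nonneg fun _ => sq_nonneg _).trans henergy) henergy hs_den hmass

lemma exists_dirichletQuotient_perforate_le {Ω : Set E2} {q : ℝ} (hq : q ∈ dirichletQuotients Ω)
    (P : Finset E2) {δ : ℝ} (hδ : 0 < δ) :
    ∃ s > 0, ∃ q' ∈ dirichletQuotients (perforate Ω P s), q' ≤ q + δ := by
  classical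
  induction P using Finset.induction_on generalizing δ with
  | empty => exact ⟨1, one_pos, q, by simpa [perforate] using hq, by linarith⟩
  | insert p P _ ih =>
    obtain ⟨s, hs, q', hq', hle⟩ := ih (half_pos hδ)
    obtain ⟨s', hs', q'', hq'', hle'⟩ := exists_dirichletQuotient_punctured_le hq' p (half_pos hδ)
    refine ⟨min s s', lt_min hs hs', q'', dirichletQuotients_mono (fun x hx => ?_) hq'',
      by linarith⟩
    obtain ⟨hxΩ, hxP⟩ := mem_perforate.1 hx.1
    rw [mem_perforate, Finset.forall_mem_insert]
    exact ⟨hxΩ, (min_le_right _ _).trans_lt (not_le.1 hx.2),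
      fun y hy => (min_le_left _ _).trans_lt (hxP y hy)⟩

lemma exists_dEig1_perforate_le {Ω : Set E2} (hΩ : IsOpen Ω) (hne : Ω.Nonempty) (P : Finset E2)
    {δ : ℝ} (hδ : 0 < δ) : ∃ r₀ > 0, ∀ r ≤ r₀, dEig1 (perforate Ω P r) ≤ dEig1 Ω + δ := by
  obtain ⟨q, hq, hq_lt⟩ := exists_lt_of_csInf_lt (dirichletQuotients_nonempty hΩ hne)
    (show sInf (dirichletQuotients Ω) < dEig1 Ω + δ / 2 from lt_add_of_pos_right _ (half_pos hδ))
  obtain ⟨s, hs, q', hq', hle⟩ := exists_dirichletQuotient_perforate_le hq P (half_pos hδ)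
  refine ⟨s, hs, fun r hr => ?_⟩
  have hmono : perforate Ω P s ⊆ perforate Ω P r := fun x hx =>
    have hx := mem_perforate.1 hx
    mem_perforate.2 ⟨hx.1, fun p hp => hr.trans_lt (hx.2 p hp)⟩
  have hle' : dEig1 (perforate Ω P r) ≤ q' := csInf_le
    ⟨0, fun _ => nonneg_of_mem_dirichletQuotients⟩ (dirichletQuotients_mono hmono hq')
  linarith

end ZeroCapacity

section HoleArea

variable {Ω : Set E2} {P : Finset E2} {r R : ℝ}

lemma IsBallPacking.sum_volumeReal_closedBall_le (hP : IsBallPacking Ω P R)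
    (hb : Bornology.IsBounded Ω) :
    ∑ p ∈ P, volume.real (Metric.closedBall p R) ≤ volume.real Ω := by
  rw [← measureReal_biUnion_finset _ (fun _ _ => measurableSet_closedBall)
    fun _ _ => measure_closedBall_lt_top.ne]
  · exact measureReal_mono (iUnion₂_subset hP.closedBall_subset) hb.measure_lt_top.ne
  · intro p hp q hq hpq
    apply Metric.closedBall_disjoint_closedBall
    linarith [hP.two_mul_lt_dist p hp q hq hpq]

lemma IsBallPacking.volumeReal_holes_le (hP : IsBallPacking Ω P R) (hb : Bornology.IsBounded Ω)
    (hr : 0 ≤ r) (hR : 0 < R) :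
    volume.real (Ω \ perforate Ω P r) ≤ (r / R) ^ 2 * volume.real Ω := by
  calc volume.real (Ω \ perforate Ω P r) ≤ volume.real (⋃ p ∈ P, Metric.closedBall p r) :=
        measureReal_mono (by rw [perforate, sdiff_sdiff_right_self]; exact inter_subset_right)
          (P.isCompact_biUnion fun p _ => isCompact_closedBall p r).measure_lt_top.ne
    _ ≤ ∑ p ∈ P, volume.real (Metric.closedBall p r) := measureReal_biUnion_finset_le _ _
    _ = (r / R) ^ 2 * ∑ p ∈ P, volume.real (Metric.closedBall p R) := by
        rw [Finset.mul_sum]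
        refine Finset.sum_congr rfl fun p _ => ?_
        rw [volumeReal_closedBall p hr, volumeReal_closedBall p hR.le]
        field_simp
    _ ≤ _ := by gcongr; exact hP.sum_volumeReal_closedBall_le hb

end HoleArea

section AlmostIsometric

variable {E : Type*} [NormedAddCommGroup E] [NormedSpace ℝ E]

/-- A `C^∞` bijection of the whole space whose derivative is everywhere `ε`-close to that of an
isometry, in norm from above and in determinant from both sides. -/
structure AlmostIsometric (Φ : E → E) (ε : ℝ) : Prop where
  contDiff : ContDiff ℝ (⊤ : ℕ∞) Φ
  bijective : Function.Bijective Φ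
  norm_fderiv_le : ∀ x, ‖fderiv ℝ Φ x‖ ≤ 1 + ε
  abs_det_sub_one_le : ∀ x, |(fderiv ℝ Φ x).det - 1| ≤ ε

section Construction

variable [CompleteSpace E] {g : E → E} {B : ℝ≥0} {t : ℝ}

lemma bijective_id_sub_smul (hg : LipschitzWith B g) (ht : |t| * B ≤ 1 / 2) :
    Function.Bijective fun x => x - t • g x := by
  rcases subsingleton_or_nontrivial E with _ | _
  · exact ⟨fun _ _ _ => Subsingleton.elim _ _, fun y => ⟨y, Subsingleton.elim _ _⟩⟩
  have happrox : ApproximatesLinearOn (fun x => x - t • g x)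
      ((ContinuousLinearEquiv.refl ℝ E : E ≃L[ℝ] E) : E →L[ℝ] E) univ (1 / 2 : ℝ≥0) := by
    intro x _ y _
    have hdiff : x - t • g x - (y - t • g y) - (x - y) = -(t • (g x - g y)) := by
      rw [smul_sub]; abel
    rw [ContinuousLinearEquiv.coe_refl, ContinuousLinearMap.id_apply, hdiff, norm_neg, norm_smul]
    calc |t| * ‖g x - g y‖ ≤ |t| * (B * ‖x - y‖) := by gcongr; exact hg.norm_sub_le x y
      _ = |t| * B * ‖x - y‖ := by ring
      _ ≤ 1 / 2 * ‖x - y‖ := by gcongr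
      _ = _ := by simp
  have hhalf : (1 / 2 : ℝ≥0) < ‖((ContinuousLinearEquiv.refl ℝ E).symm : E →L[ℝ] E)‖₊⁻¹ := by
    have hnorm : ‖((ContinuousLinearEquiv.refl ℝ E).symm : E →L[ℝ] E)‖₊ = 1 := by ext; simp
    rw [hnorm, inv_one]
    exact NNReal.half_lt_self one_ne_zero
  exact ⟨injOn_univ.1 (happrox.injOn (Or.inr hhalf)), happrox.surjective (Or.inr hhalf)⟩

lemma eventually_almostIsometric_id_sub_smul [FiniteDimensional ℝ E] (hg : ContDiff ℝ (⊤ : ℕ∞) g)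
    (hc : HasCompactSupport g) {ε : ℝ} (hε : 0 < ε) :
    ∀ᶠ t : ℝ in nhds 0, AlmostIsometric (fun x => x - t • g x) ε := by
  obtain ⟨B, hB⟩ := (hg.of_le (m := 1) (by simp)).lipschitzWith_of_hasCompactSupport hc (by simp)
  have hgrad : ∀ x, ‖fderiv ℝ g x‖ ≤ B := fun x => norm_fderiv_le_of_lipschitz ℝ hB
  obtain ⟨ς, hς, hdet⟩ := Metric.continuous_iff.1
    (ContinuousLinearMap.continuous_det (𝕜 := ℝ) (E := E)) (ContinuousLinearMap.id ℝ E) ε hε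
  have hsmall : Tendsto (fun t : ℝ => |t| * B) (nhds 0) (nhds 0) :=
    Continuous.tendsto' (by fun_prop) _ _ (by simp)
  filter_upwards [hsmall.eventually_le_const one_half_pos, hsmall.eventually_lt_const hς,
    hsmall.eventually_le_const hε] with t ht_half ht_det ht_norm
  have hderiv : ∀ x, fderiv ℝ (fun x => x - t • g x) x =
      ContinuousLinearMap.id ℝ E - t • fderiv ℝ g x := fun x =>
    ((hasFDerivAt_id x).sub ((hg.differentiable (by simp) x).hasFDerivAt.const_smul t)).fderiv
  have hperturb : ∀ x, ‖t • fderiv ℝ g x‖ ≤ |t| * B := fun x => by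
    rw [norm_smul, norm_eq_abs]; gcongr; exact hgrad x
  refine ⟨contDiff_id.sub (hg.const_smul t), bijective_id_sub_smul hB ht_half, fun x => ?_,
    fun x => ?_⟩
  · rw [hderiv]
    exact (norm_sub_le _ _).trans
      (add_le_add ContinuousLinearMap.norm_id_le ((hperturb x).trans ht_norm))
  · have hclose : dist (fderiv ℝ (fun x => x - t • g x) x) (ContinuousLinearMap.id ℝ E) < ς := by
      rw [hderiv, dist_eq_norm, sub_sub_cancel_left, norm_neg]
      exact (hperturb x).trans_lt ht_det
    simpa [ContinuousLinearMap.det, Real.dist_eq] using (hdet _ hclose).le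

end Construction

variable [FiniteDimensional ℝ E] [MeasurableSpace E] [BorelSpace E] (μ : Measure E)
  [μ.IsAddHaarMeasure] {Φ : E → E} {ε : ℝ}

lemma integral_eq_integral_abs_det_mul (hΦ : Differentiable ℝ Φ) (hbij : Function.Bijective Φ)
    (F : E → ℝ) : ∫ x, F x ∂μ = ∫ x, |(fderiv ℝ Φ x).det| * F (Φ x) ∂μ := by
  simpa [image_univ, hbij.surjective.range_eq] using
    integral_image_eq_integral_abs_det_fderiv_smul μ MeasurableSet.univ
      (fun x _ => (hΦ x).hasFDerivAt.hasFDerivWithinAt) hbij.injective.injOn F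

lemma integrable_iff_integrable_abs_det_mul (hΦ : Differentiable ℝ Φ)
    (hbij : Function.Bijective Φ) (F : E → ℝ) :
    Integrable F μ ↔ Integrable (fun x => |(fderiv ℝ Φ x).det| * F (Φ x)) μ := by
  simpa [image_univ, hbij.surjective.range_eq] using
    integrableOn_image_iff_integrableOn_abs_det_fderiv_smul μ MeasurableSet.univ
      (fun x _ => (hΦ x).hasFDerivAt.hasFDerivWithinAt) hbij.injective.injOn F

variable {μ} {u : E → ℝ}

lemma AlmostIsometric.integral_sq_le (hΦ : AlmostIsometric Φ ε)
    (hint : Integrable (fun x => u (Φ x) ^ 2) μ) :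
    ∫ x, u x ^ 2 ∂μ ≤ (1 + ε) * ∫ x, u (Φ x) ^ 2 ∂μ := by
  rw [integral_eq_integral_abs_det_mul μ (hΦ.contDiff.differentiable (by simp)) hΦ.bijective,
    ← integral_const_mul]
  refine integral_mono_of_nonneg (Eventually.of_forall fun x => by positivity) (hint.const_mul _)
    (Eventually.of_forall fun x => ?_)
  have hdet := abs_le.1 (hΦ.abs_det_sub_one_le x)
  have hdet_le : |(fderiv ℝ Φ x).det| ≤ 1 + ε := abs_le.2 ⟨by linarith, by linarith⟩
  dsimp only
  gcongr

lemma AlmostIsometric.integral_norm_fderiv_comp_sq_le (hΦ : AlmostIsometric Φ ε) (hε : ε ≤ 1)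
    (hu : ContDiff ℝ 1 u) (hc : HasCompactSupport u) :
    (1 - ε) * ∫ x, ‖fderiv ℝ (fun y => u (Φ y)) x‖ ^ 2 ∂μ ≤
      (1 + ε) ^ 2 * ∫ x, ‖fderiv ℝ u x‖ ^ 2 ∂μ := by
  have hΦd : Differentiable ℝ Φ := hΦ.contDiff.differentiable (by simp)
  have hint := (integrable_iff_integrable_abs_det_mul μ hΦd hΦ.bijective _).1 <|
    integrable_norm_sq_of_hasCompactSupport (hu.continuous_fderiv (by simp)) (hc.fderiv ℝ)
  rw [integral_eq_integral_abs_det_mul μ hΦd hΦ.bijective (fun x => ‖fderiv ℝ u x‖ ^ 2),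
    ← integral_const_mul, ← integral_const_mul]
  refine integral_mono_of_nonneg (Eventually.of_forall fun x => ?_) (hint.const_mul _)
    (Eventually.of_forall fun x => ?_)
  · exact mul_nonneg (sub_nonneg.2 hε) (sq_nonneg _)
  have hchain : fderiv ℝ (fun y => u (Φ y)) x = (fderiv ℝ u (Φ x)).comp (fderiv ℝ Φ x) :=
    fderiv_fun_comp x (hu.differentiable (by simp) _) (hΦd x)
  have hnorm : ‖fderiv ℝ (fun y => u (Φ y)) x‖ ≤ ‖fderiv ℝ u (Φ x)‖ * (1 + ε) := by
    rw [hchain]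
    exact (ContinuousLinearMap.opNorm_comp_le _ _).trans (by gcongr; exact hΦ.norm_fderiv_le x)
  have hdet : 1 - ε ≤ |(fderiv ℝ Φ x).det| := by
    linarith [neg_le_of_abs_le (hΦ.abs_det_sub_one_le x), le_abs_self (fderiv ℝ Φ x).det]
  calc (1 - ε) * ‖fderiv ℝ (fun y => u (Φ y)) x‖ ^ 2
      ≤ |(fderiv ℝ Φ x).det| * (‖fderiv ℝ u (Φ x)‖ * (1 + ε)) ^ 2 := by gcongr
    _ = _ := by ring

end AlmostIsometric

section DirichletNoJumps

variable {Ω Ω' : Set E2} {P : Finset E2} {R : ℝ}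

lemma AlmostIsometric.dEig1_le {Φ : E2 → E2} {ε : ℝ} (hΦ : AlmostIsometric Φ ε) (hε : ε < 1)
    (hb : Bornology.IsBounded Ω) (hΩ' : IsOpen Ω') (hne : Ω'.Nonempty) (hpre : Φ ⁻¹' Ω' ⊆ Ω) :
    (1 - ε) / (1 + ε) ^ 3 * dEig1 Ω ≤ dEig1 Ω' := by
  have hε0 : 0 ≤ ε := (abs_nonneg _).trans (hΦ.abs_det_sub_one_le 0)
  refine le_dEig1 hΩ' hne fun u hu hc hs => ?_
  have hcomp_supp : tsupport (fun x => u (Φ x)) ⊆ Ω :=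
    (tsupport_comp_subset_preimage u hΦ.contDiff.continuous).trans
      ((preimage_mono hs).trans hpre)
  have hcomp_compact : HasCompactSupport fun x => u (Φ x) :=
    Metric.isCompact_of_isClosed_isBounded (isClosed_tsupport _) (hb.subset hcomp_supp)
  have hcomp : ContDiff ℝ (⊤ : ℕ∞) fun x => u (Φ x) := hu.comp hΦ.contDiff
  have hmass := hΦ.integral_sq_le (u := u) (μ := volume) <| by
    simpa only [norm_eq_abs, sq_abs] using
      integrable_norm_sq_of_hasCompactSupport (μ := volume) hcomp.continuous hcomp_compact
  have henergy := hΦ.integral_norm_fderiv_comp_sq_le (μ := volume) hε.le (hu.of_le (by simp)) hc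
  rw [div_mul_eq_mul_div, div_mul_eq_mul_div, div_le_iff₀ (by positivity)]
  have hsub : 0 ≤ 1 - ε := sub_nonneg.2 hε.le
  calc (1 - ε) * dEig1 Ω * ∫ x, u x ^ 2
      ≤ (1 - ε) * dEig1 Ω * ((1 + ε) * ∫ x, u (Φ x) ^ 2) :=
        mul_le_mul_of_nonneg_left hmass (mul_nonneg hsub (dEig1_nonneg Ω))
    _ = (1 + ε) * ((1 - ε) * (dEig1 Ω * ∫ x, u (Φ x) ^ 2)) := by ring
    _ ≤ (1 + ε) * ((1 - ε) * ∫ x, ‖fderiv ℝ (fun y => u (Φ y)) x‖ ^ 2) := by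
        gcongr; exact dEig1_mul_le hcomp hcomp_compact hcomp_supp
    _ ≤ (1 + ε) * ((1 + ε) ^ 2 * ∫ x, ‖fderiv ℝ u x‖ ^ 2) := by gcongr
    _ = _ := by ring

/-- A smooth vector field that equals `x - p` within distance `R / 2` of a centre `p` of a packing
by balls of radius `R`, and vanishes outside these balls: its flow dilates all holes at once. -/
def dilationField (P : Finset E2) (R : ℝ) (x : E2) : E2 := ∑ p ∈ P, plateau p (R / 2) x • (x - p)

lemma contDiff_dilationField (P : Finset E2) (R : ℝ) :
    ContDiff ℝ (⊤ : ℕ∞) (dilationField P R) :=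
  ContDiff.sum fun p _ => (contDiff_plateau p _).smul (contDiff_id.sub contDiff_const)

lemma IsBallPacking.dilationField_eq_zero (hP : IsBallPacking Ω P R) (hR : 0 < R) {x : E2}
    (hx : x ∉ Ω) : dilationField P R x = 0 :=
  Finset.sum_eq_zero fun p hp => by
    have hfar : R ≤ dist x p := le_of_not_ge fun h => hx (hP.closedBall_subset p hp h)
    rw [plateau_eq_zero (half_pos hR) (by linarith), zero_smul]

lemma IsBallPacking.dilationField_eq_sub (hP : IsBallPacking Ω P R) (hR : 0 < R) {p x : E2}
    (hp : p ∈ P) (hx : dist x p ≤ R / 2) : dilationField P R x = x - p := by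
  rw [dilationField, Finset.sum_eq_single_of_mem p hp, plateau_eq_one (half_pos hR) hx, one_smul]
  intro q hq hqp
  have hfar := hP.lt_dist hp hq hqp (hx.trans (half_le_self hR.le))
  rw [plateau_eq_zero (half_pos hR) (by linarith), zero_smul]

lemma IsBallPacking.preimage_perforate_subset (hP : IsBallPacking Ω P R) {r t : ℝ} (hR : 0 < R)
    (hr : r ≤ R / 2) (ht : t < 1) :
    (fun x => x - t • dilationField P R x) ⁻¹' perforate Ω P ((1 - t) * r) ⊆ perforate Ω P r := by
  intro x hx
  rw [mem_preimage, mem_perforate] at hx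
  obtain ⟨hxΩ, hxP⟩ := hx
  refine mem_perforate.2 ⟨?_, fun p hp => ?_⟩
  · by_contra hx_out
    rw [hP.dilationField_eq_zero hR hx_out, smul_zero, sub_zero] at hxΩ
    exact hx_out hxΩ
  · by_contra! hxp
    have hdist := hxP p hp
    have hscale : x - t • (x - p) - p = (1 - t) • (x - p) := by rw [sub_smul, one_smul]; abel
    rw [hP.dilationField_eq_sub hR hp (hxp.trans hr), dist_eq_norm, hscale, norm_smul, norm_eq_abs,
      abs_of_pos (sub_pos.2 ht), ← dist_eq_norm] at hdist
    exact (lt_of_mul_lt_mul_left hdist (sub_pos.2 ht).le).not_ge hxp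

lemma IsBallPacking.exists_dEig1_perforate_shrink_le (hP : IsBallPacking Ω P R) (hΩ : IsOpen Ω)
    (hb : Bornology.IsBounded Ω) (hR : 0 < R) {η : ℝ} (hη : 0 < η) :
    ∃ t ∈ Ioo (0 : ℝ) 1, ∀ r, 0 ≤ r → r ≤ R / 2 → (perforate Ω P r).Nonempty →
      dEig1 (perforate Ω P r) ≤ (1 + η) * dEig1 (perforate Ω P ((1 - t) * r)) := by
  have hdist : Tendsto (fun ε : ℝ => (1 + η) * ((1 - ε) / (1 + ε) ^ 3)) (nhds 0)
      (nhds (1 + η)) := by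
    have : ContinuousAt (fun ε : ℝ => (1 + η) * ((1 - ε) / (1 + ε) ^ 3)) 0 := by
      fun_prop (disch := norm_num)
    simpa [ContinuousAt] using this
  obtain ⟨ε, ⟨hε_quot, hε_one⟩, hε⟩ := ((((hdist.eventually_const_le (lt_add_of_pos_right 1 hη)).and
    (eventually_lt_nhds one_pos)).filter_mono nhdsWithin_le_nhds).and
      (self_mem_nhdsWithin (s := Ioi (0 : ℝ)))).exists
  have hc : HasCompactSupport (dilationField P R) := HasCompactSupport.intro hb.isCompact_closure
    fun x hx => hP.dilationField_eq_zero hR fun h => hx (subset_closure h)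
  obtain ⟨t, ⟨ht_iso, ht_one⟩, ht⟩ := ((((eventually_almostIsometric_id_sub_smul
    (contDiff_dilationField P R) hc hε).and (eventually_lt_nhds one_pos)).filter_mono
      nhdsWithin_le_nhds).and (self_mem_nhdsWithin (s := Ioi (0 : ℝ)))).exists
  refine ⟨t, ⟨ht, ht_one⟩, fun r hr hrR hne => ?_⟩
  have hne' : (perforate Ω P ((1 - t) * r)).Nonempty := hne.mono fun x hx => by
    have hx := mem_perforate.1 hx
    exact mem_perforate.2 ⟨hx.1, fun p hp =>
      (mul_le_of_le_one_left hr (sub_le_self 1 (le_of_lt ht))).trans_lt (hx.2 p hp)⟩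
  have hbound := ht_iso.dEig1_le hε_one (hb.subset (perforate_subset Ω P r))
    (isOpen_perforate hΩ P _) hne' (hP.preimage_perforate_subset hR hrR ht_one)
  calc dEig1 (perforate Ω P r)
      ≤ (1 + η) * ((1 - ε) / (1 + ε) ^ 3) * dEig1 (perforate Ω P r) :=
        le_mul_of_one_le_left (dEig1_nonneg _) hε_quot
    _ ≤ _ := by rw [mul_assoc]; gcongr

end DirichletNoJumps

section PolarCoordinates

/-- The annulus `a < |x - p| < b`. -/
def annulus {X : Type*} [PseudoMetricSpace X] (p : X) (a b : ℝ) : Set X :=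
  Metric.ball p b \ Metric.closedBall p a

lemma mem_annulus {X : Type*} [PseudoMetricSpace X] {p x : X} {a b : ℝ} :
    x ∈ annulus p a b ↔ a < dist x p ∧ dist x p < b := by
  rw [annulus, Set.mem_sdiff, Metric.mem_ball, Metric.mem_closedBall, not_le, and_comm]

lemma annulus_subset_annulus {X : Type*} [PseudoMetricSpace X] (p : X) {a b a' b' : ℝ}
    (ha : a' ≤ a) (hb : b ≤ b') : annulus p a b ⊆ annulus p a' b' :=
  sdiff_subset_sdiff (Metric.ball_subset_ball hb) (Metric.closedBall_subset_closedBall ha)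

lemma measurableSet_annulus {X : Type*} [PseudoMetricSpace X] [MeasurableSpace X]
    [OpensMeasurableSpace X] (p : X) (a b : ℝ) : MeasurableSet (annulus p a b) :=
  measurableSet_ball.diff measurableSet_closedBall

/-- The unit vector at angle `θ`, so that polar coordinates are `(s, θ) ↦ s • unitVector θ`. -/
def unitVector (θ : ℝ) : E2 := !₂[cos θ, sin θ]

@[fun_prop]
lemma continuous_unitVector : Continuous unitVector :=
  (PiLp.continuous_toLp 2 _).comp <| continuous_pi fun i => by
    fin_cases i
    exacts [continuous_cos, continuous_sin]

lemma norm_unitVector (θ : ℝ) : ‖unitVector θ‖ = 1 := by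
  simp [EuclideanSpace.norm_eq, unitVector]

lemma hasDerivAt_unitVector (θ : ℝ) : HasDerivAt unitVector (unitVector (θ + π / 2)) θ := by
  have hcoord : HasDerivAt (fun θ : ℝ => ![cos θ, sin θ]) ![cos (θ + π / 2), sin (θ + π / 2)] θ :=
    hasDerivAt_pi.2 fun i => by
      fin_cases i
      · simpa [cos_add_pi_div_two] using hasDerivAt_cos θ
      · simpa [sin_add_pi_div_two] using hasDerivAt_sin θ
  exact (PiLp.continuousLinearEquiv 2 ℝ
    (fun _ : Fin 2 => ℝ)).symm.hasFDerivAt.comp_hasDerivAt θ hcoord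

lemma dist_add_smul_unitVector (p : E2) {s : ℝ} (hs : 0 ≤ s) (θ : ℝ) :
    dist (p + s • unitVector θ) p = s := by
  rw [dist_eq_norm, add_sub_cancel_left, norm_smul, norm_unitVector, mul_one, norm_of_nonneg hs]

lemma polarCoord_symm_eq_smul_unitVector (z : ℝ × ℝ) :
    !₂[(polarCoord.symm z).1, (polarCoord.symm z).2] = z.1 • unitVector z.2 := by
  ext i; fin_cases i <;> simp [unitVector, polarCoord_symm_apply]

variable {G : E2 → ℝ≥0∞}

lemma lintegral_eq_lintegral_polar (p : E2) (hG : Measurable G) :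
    ∫⁻ x, G x =
      ∫⁻ z in Ioi (0 : ℝ) ×ˢ Ioo (-π) π, ENNReal.ofReal z.1 * G (p + z.1 • unitVector z.2) := by
  have hGp : Measurable fun x => G (p + x) := hG.comp (measurable_const_add p)
  have hcartesian : ∫⁻ x, G (p + x) = ∫⁻ z : ℝ × ℝ, G (p + !₂[z.1, z.2]) := by
    have hpair := ((volume_preserving_finTwoArrow ℝ).symm).lintegral_comp
      (hGp.comp (PiLp.volume_preserving_toLp (Fin 2)).measurable)
    exact (((PiLp.volume_preserving_toLp (Fin 2)).lintegral_comp hGp).symm).trans hpair.symm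
  rw [← lintegral_add_left_eq_self G p, hcartesian, ← lintegral_comp_polarCoord_symm]
  simp_rw [polarCoord_symm_eq_smul_unitVector, smul_eq_mul]
  rfl

lemma setLIntegral_annulus_eq_polar (p : E2) (hG : Measurable G) {a b : ℝ} (ha : 0 ≤ a) :
    ∫⁻ x in annulus p a b, G x =
      ∫⁻ z in Ioo a b ×ˢ Ioo (-π) π, ENNReal.ofReal z.1 * G (p + z.1 • unitVector z.2) := by
  have hmeas := measurableSet_annulus p a b
  have hrect : MeasurableSet (Ioo a b ×ˢ Ioo (-π) π) := measurableSet_Ioo.prod measurableSet_Ioo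
  have hsub : Ioo a b ×ˢ Ioo (-π) π ⊆ Ioi (0 : ℝ) ×ˢ Ioo (-π) π :=
    prod_mono_left fun s hs => ha.trans_lt hs.1
  rw [← lintegral_indicator hmeas, lintegral_eq_lintegral_polar p (hG.indicator hmeas),
    ← inter_eq_left.2 hsub, ← Measure.restrict_restrict hrect, ← lintegral_indicator hrect]
  refine setLIntegral_congr_fun (measurableSet_Ioi.prod measurableSet_Ioo) ?_
  rintro ⟨s, θ⟩ ⟨hs, hθ⟩
  have hiff : p + s • unitVector θ ∈ annulus p a b ↔ (s, θ) ∈ Ioo a b ×ˢ Ioo (-π) π := by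
    simp only [mem_annulus, dist_add_smul_unitVector p (le_of_lt hs), mem_prod, hθ, and_true,
      mem_Ioo]
  by_cases hmem : (s, θ) ∈ Ioo a b ×ˢ Ioo (-π) π
  · simp only [indicator_of_mem hmem, indicator_of_mem (hiff.2 hmem)]
  · simp only [indicator_of_notMem hmem, indicator_of_notMem (mt hiff.1 hmem), mul_zero]

lemma measurable_polar_integrand (p : E2) (hG : Measurable G) :
    Measurable fun z : ℝ × ℝ => ENNReal.ofReal z.1 * G (p + z.1 • unitVector z.2) :=
  measurable_fst.ennreal_ofReal.fun_mul <|
    hG.comp (by fun_prop : Continuous fun z : ℝ × ℝ => p + z.1 • unitVector z.2).measurable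

lemma setLIntegral_annulus_eq_radial_angular (p : E2) (hG : Measurable G) {a b : ℝ} (ha : 0 ≤ a) :
    ∫⁻ x in annulus p a b, G x = ∫⁻ s in Ioo a b, ENNReal.ofReal s *
      ∫⁻ θ in Ioo (-π) π, G (p + s • unitVector θ) := by
  rw [setLIntegral_annulus_eq_polar p hG ha, Measure.volume_eq_prod, ← Measure.prod_restrict,
    lintegral_prod _ (measurable_polar_integrand p hG).aemeasurable]
  exact lintegral_congr fun s => lintegral_const_mul' _ _ ENNReal.ofReal_ne_top

lemma setLIntegral_annulus_eq_angular_radial (p : E2) (hG : Measurable G) {a b : ℝ} (ha : 0 ≤ a) :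
    ∫⁻ x in annulus p a b, G x = ∫⁻ θ in Ioo (-π) π,
      ∫⁻ s in Ioo a b, ENNReal.ofReal s * G (p + s • unitVector θ) := by
  rw [setLIntegral_annulus_eq_polar p hG ha, Measure.volume_eq_prod, ← Measure.prod_restrict,
    lintegral_prod_symm _ (measurable_polar_integrand p hG).aemeasurable]

end PolarCoordinates

section AnnulusPoincare

variable {F : Type*} [NormedAddCommGroup F] [NormedSpace ℝ F] [CompleteSpace F] {u : E2 → F}

lemma enorm_sub_sq_le_arc_energy (hu : ContDiff ℝ 1 u) (p : E2) {s : ℝ} (hs : 0 ≤ s)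
    {θ θ' : ℝ} (hθ : θ ∈ Ioo (-π) π) (hθ' : θ' ∈ Ioo (-π) π) :
    ‖u (p + s • unitVector θ) - u (p + s • unitVector θ')‖ₑ ^ 2 ≤ ENNReal.ofReal (2 * π) *
      (ENNReal.ofReal s ^ 2 * ∫⁻ τ in Ioo (-π) π, ‖fderiv ℝ u (p + s • unitVector τ)‖ₑ ^ 2) := by
  wlog hle : θ' ≤ θ generalizing θ θ'
  · rw [enorm_sub_rev]
    exact this hθ' hθ (le_of_not_ge hle)
  have hderiv : ∀ t, HasDerivAt (fun t => u (p + s • unitVector t))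
      (fderiv ℝ u (p + s • unitVector t) (s • unitVector (t + π / 2))) t := fun t =>
    (hu.differentiable (by simp) _).hasFDerivAt.comp_hasDerivAt t
      (((hasDerivAt_unitVector t).const_smul s).const_add p)
  have hcont : Continuous fun t =>
      fderiv ℝ u (p + s • unitVector t) (s • unitVector (t + π / 2)) :=
    ((hu.continuous_fderiv (by simp)).comp (by fun_prop)).clm_apply (by fun_prop)
  have hspeed : ∀ t, ‖fderiv ℝ u (p + s • unitVector t) (s • unitVector (t + π / 2))‖ₑ ≤
      ENNReal.ofReal s * ‖fderiv ℝ u (p + s • unitVector t)‖ₑ := fun t => by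
    refine (ContinuousLinearMap.le_opENorm _ _).trans_eq ?_
    rw [← ofReal_norm (s • unitVector _), norm_smul, norm_unitVector, mul_one, norm_of_nonneg hs,
      mul_comm]
  calc ‖u (p + s • unitVector θ) - u (p + s • unitVector θ')‖ₑ ^ 2
      ≤ ENNReal.ofReal (θ - θ') * ∫⁻ t in Ioo θ' θ,
          ‖fderiv ℝ u (p + s • unitVector t) (s • unitVector (t + π / 2))‖ₑ ^ 2 :=
        enorm_sub_sq_le_lintegral_deriv (fun t _ => hderiv t) hcont.continuousOn hle
    _ ≤ ENNReal.ofReal (2 * π) * ∫⁻ t in Ioo (-π) π,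
          ENNReal.ofReal s ^ 2 * ‖fderiv ℝ u (p + s • unitVector t)‖ₑ ^ 2 := by
        gcongr with t
        · linarith [hθ.2, hθ'.1]
        · exact hθ'.1.le
        · exact hθ.2.le
        · exact (pow_le_pow_left' (hspeed t) 2).trans_eq (mul_pow _ _ _)
    _ = _ := by rw [lintegral_const_mul' _ _ (by finiteness)]

lemma enorm_sub_sq_le_ray_energy (hu : ContDiff ℝ 1 u) (p : E2) {a b : ℝ} (hab : a ≤ b) (θ : ℝ) :
    ‖u (p + b • unitVector θ) - u (p + a • unitVector θ)‖ₑ ^ 2 ≤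
      ENNReal.ofReal (b - a) * ∫⁻ s in Ioo a b, ‖fderiv ℝ u (p + s • unitVector θ)‖ₑ ^ 2 := by
  have hcont : Continuous fun t : ℝ => fderiv ℝ u (p + t • unitVector θ) (unitVector θ) :=
    ((hu.continuous_fderiv (by simp)).comp (by fun_prop)).clm_apply continuous_const
  refine (enorm_sub_sq_le_lintegral_deriv (f := fun t : ℝ => u (p + t • unitVector θ))
    (fun t _ => hasDerivAt_comp_add_smul (hu.differentiable (by simp)) p _ t)
    hcont.continuousOn hab).trans ?_
  gcongr with s
  refine (ContinuousLinearMap.le_opENorm _ _).trans_eq ?_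
  rw [← ofReal_norm (unitVector θ), norm_unitVector, ENNReal.ofReal_one, mul_one]

lemma exists_ray_energy_le {G : E2 → ℝ≥0∞} (hG : Measurable G) (p : E2) {a : ℝ} (ha : 0 ≤ a)
    (b : ℝ) : ∃ θ ∈ Ioo (-π) π, ENNReal.ofReal a * ∫⁻ s in Ioo a b, G (p + s • unitVector θ) ≤
      ∫⁻ x in annulus p a b, G x := by
  have hvol : volume (Ioo (-π) π) = ENNReal.ofReal (2 * π) := by
    rw [Real.volume_Ioo]; congr 1; ring
  have hone : 1 ≤ ENNReal.ofReal (2 * π) := by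
    rw [ENNReal.one_le_ofReal]; linarith [pi_gt_three]
  obtain ⟨θ, hθ, havg⟩ := exists_le_setLAverage (μ := volume) (s := Ioo (-π) π)
    (by rw [hvol]; exact (zero_lt_one.trans_le hone).ne') (by rw [hvol]; finiteness)
    ((measurable_polar_integrand p hG).lintegral_prod_left'
      (μ := volume.restrict (Ioo a b))).aemeasurable
  refine ⟨θ, hθ, ?_⟩
  calc ENNReal.ofReal a * ∫⁻ s in Ioo a b, G (p + s • unitVector θ)
      = ∫⁻ s in Ioo a b, ENNReal.ofReal a * G (p + s • unitVector θ) :=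
        (lintegral_const_mul' _ _ (by finiteness)).symm
    _ ≤ ∫⁻ s in Ioo a b, ENNReal.ofReal s * G (p + s • unitVector θ) :=
        setLIntegral_mono' measurableSet_Ioo fun s hs => by gcongr; exact hs.1.le
    _ ≤ (∫⁻ x in annulus p a b, G x) / ENNReal.ofReal (2 * π) := by
        rw [setLIntegral_annulus_eq_angular_radial p hG ha, ← hvol, ← setLAverage_eq]
        exact havg
    _ ≤ _ := ENNReal.div_le_of_le_mul (le_mul_of_one_le_right' hone)

lemma exists_enorm_sub_sq_le_arc_add_annulus (hu : ContDiff ℝ 1 u) (p : E2) {a : ℝ} (ha : 0 ≤ a) :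
    ∃ m, ∀ s ∈ Ioo a (2 * a), ∀ θ ∈ Ioo (-π) π, ‖u (p + s • unitVector θ) - m‖ₑ ^ 2 ≤
      2 * (ENNReal.ofReal (2 * π) * (ENNReal.ofReal s ^ 2 *
          ∫⁻ τ in Ioo (-π) π, ‖fderiv ℝ u (p + s • unitVector τ)‖ₑ ^ 2) +
        ∫⁻ x in annulus p a (2 * a), ‖fderiv ℝ u x‖ₑ ^ 2) := by
  obtain ⟨θ', hθ', hray⟩ := exists_ray_energy_le
    ((hu.continuous_fderiv (by simp)).enorm.measurable.pow_const 2) p ha (2 * a)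
  refine ⟨u (p + a • unitVector θ'), fun s hs θ hθ => ?_⟩
  have harc := enorm_sub_sq_le_arc_energy hu p (ha.trans hs.1.le) hθ hθ'
  have hradial : ‖u (p + s • unitVector θ') - u (p + a • unitVector θ')‖ₑ ^ 2 ≤
      ∫⁻ x in annulus p a (2 * a), ‖fderiv ℝ u x‖ₑ ^ 2 := by
    refine (enorm_sub_sq_le_ray_energy hu p hs.1.le θ').trans (le_trans ?_ hray)
    gcongr
    · linarith [hs.2]
    · exact hs.2.le
  rw [← sub_add_sub_cancel _ (u (p + s • unitVector θ'))]
  exact (enorm_add_sq_le _ _).trans (by gcongr)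

lemma exists_lintegral_circle_enorm_sub_sq_le (hu : ContDiff ℝ 1 u) (p : E2) {a : ℝ} (ha : 0 ≤ a) :
    ∃ m, ∀ s ∈ Ioo a (2 * a),
      ENNReal.ofReal s * ∫⁻ θ in Ioo (-π) π, ‖u (p + s • unitVector θ) - m‖ₑ ^ 2 ≤
        8 * ENNReal.ofReal (2 * π) ^ 2 * ENNReal.ofReal a ^ 2 * (ENNReal.ofReal s *
          ∫⁻ τ in Ioo (-π) π, ‖fderiv ℝ u (p + s • unitVector τ)‖ₑ ^ 2) +
        4 * ENNReal.ofReal (2 * π) * ENNReal.ofReal a *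
          ∫⁻ x in annulus p a (2 * a), ‖fderiv ℝ u x‖ₑ ^ 2 := by
  obtain ⟨m, hm⟩ := exists_enorm_sub_sq_le_arc_add_annulus hu p ha
  refine ⟨m, fun s hs => ?_⟩
  have hangle : volume (Ioo (-π) π) = ENNReal.ofReal (2 * π) := by
    rw [Real.volume_Ioo]; congr 1; ring
  have hs_le : ENNReal.ofReal s ≤ 2 * ENNReal.ofReal a := by
    rw [← ENNReal.ofReal_ofNat 2, ← ENNReal.ofReal_mul zero_le_two]
    exact ENNReal.ofReal_le_ofReal hs.2.le
  set energy := ∫⁻ x in annulus p a (2 * a), ‖fderiv ℝ u x‖ₑ ^ 2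
  set arc := ∫⁻ τ in Ioo (-π) π, ‖fderiv ℝ u (p + s • unitVector τ)‖ₑ ^ 2
  set T := ENNReal.ofReal (2 * π)
  calc ENNReal.ofReal s * ∫⁻ θ in Ioo (-π) π, ‖u (p + s • unitVector θ) - m‖ₑ ^ 2
      ≤ ENNReal.ofReal s * ∫⁻ _ in Ioo (-π) π, 2 * (T * (ENNReal.ofReal s ^ 2 * arc) + energy) := by
        gcongr ENNReal.ofReal s * ?_
        exact setLIntegral_mono' measurableSet_Ioo (hm s hs)
    _ = 2 * T ^ 2 * ENNReal.ofReal s ^ 2 * (ENNReal.ofReal s * arc) +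
          2 * T * ENNReal.ofReal s * energy := by rw [setLIntegral_const, hangle]; ring
    _ ≤ 2 * T ^ 2 * (2 * ENNReal.ofReal a) ^ 2 * (ENNReal.ofReal s * arc) +
          2 * T * (2 * ENNReal.ofReal a) * energy := by gcongr
    _ = _ := by ring

variable (F) in
lemma exists_setLIntegral_annulus_enorm_sub_sq_le :
    ∃ C : ℝ≥0, ∀ u : E2 → F, ContDiff ℝ 1 u → ∀ (p : E2) (a : ℝ), 0 ≤ a → ∃ m,
      ∫⁻ x in annulus p a (2 * a), ‖u x - m‖ₑ ^ 2 ≤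
        C * ENNReal.ofReal a ^ 2 * ∫⁻ x in annulus p a (2 * a), ‖fderiv ℝ u x‖ₑ ^ 2 := by
  let T : ℝ≥0 := (2 * π).toNNReal
  refine ⟨8 * T ^ 2 + 4 * T, fun u hu p a ha => ?_⟩
  obtain ⟨m, hm⟩ := exists_lintegral_circle_enorm_sub_sq_le hu p ha
  refine ⟨m, ?_⟩
  have hgrad := setLIntegral_annulus_eq_radial_angular p
    ((hu.continuous_fderiv (by simp)).enorm.measurable.pow_const 2) ha (b := 2 * a)
  set energy := ∫⁻ x in annulus p a (2 * a), ‖fderiv ℝ u x‖ₑ ^ 2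
  set arc : ℝ → ℝ≥0∞ := fun s => ∫⁻ θ in Ioo (-π) π, ‖fderiv ℝ u (p + s • unitVector θ)‖ₑ ^ 2
  calc ∫⁻ x in annulus p a (2 * a), ‖u x - m‖ₑ ^ 2
      = ∫⁻ s in Ioo a (2 * a), ENNReal.ofReal s *
          ∫⁻ θ in Ioo (-π) π, ‖u (p + s • unitVector θ) - m‖ₑ ^ 2 :=
        setLIntegral_annulus_eq_radial_angular p
          ((hu.continuous.fun_sub continuous_const).enorm.measurable.pow_const 2) ha
    _ ≤ ∫⁻ s in Ioo a (2 * a), (8 * T ^ 2 * ENNReal.ofReal a ^ 2 * (ENNReal.ofReal s * arc s) +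
          4 * T * ENNReal.ofReal a * energy) := setLIntegral_mono' measurableSet_Ioo hm
    _ = 8 * T ^ 2 * ENNReal.ofReal a ^ 2 * energy +
          4 * T * ENNReal.ofReal a * energy * ENNReal.ofReal a := by
        rw [lintegral_add_right _ measurable_const, lintegral_const_mul' _ _ (by finiteness),
          ← hgrad, setLIntegral_const, Real.volume_Ioo, two_mul, add_sub_cancel_right]
    _ = _ := by push_cast; ring

lemma setLIntegral_annulus_enorm_sq_le_of_eq_zero (hu : ContDiff ℝ 1 u) (p : E2) {r R : ℝ}
    (hr : 0 ≤ r) (hR : 0 ≤ R) (hzero : ∀ x, dist x p = R → u x = 0) :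
    ∫⁻ x in annulus p r R, ‖u x‖ₑ ^ 2 ≤
      ENNReal.ofReal R ^ 2 * ∫⁻ x in annulus p r R, ‖fderiv ℝ u x‖ₑ ^ 2 := by
  rw [setLIntegral_annulus_eq_angular_radial p (hu.continuous.enorm.measurable.pow_const 2) hr,
    setLIntegral_annulus_eq_angular_radial p
      ((hu.continuous_fderiv (by simp)).enorm.measurable.pow_const 2) hr,
    ← lintegral_const_mul' _ _ (by finiteness)]
  refine lintegral_mono fun θ => ?_
  set ray := ∫⁻ s in Ioo r R, ENNReal.ofReal s * ‖fderiv ℝ u (p + s • unitVector θ)‖ₑ ^ 2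
  have pointwise : ∀ s ∈ Ioo r R, ENNReal.ofReal s * ‖u (p + s • unitVector θ)‖ₑ ^ 2 ≤
      ENNReal.ofReal R * ray := by
    intro s hs
    have hradial := enorm_sub_sq_le_ray_energy hu p hs.2.le θ
    rw [hzero _ (dist_add_smul_unitVector p hR θ), zero_sub, enorm_neg] at hradial
    calc ENNReal.ofReal s * ‖u (p + s • unitVector θ)‖ₑ ^ 2
        ≤ ENNReal.ofReal s * (ENNReal.ofReal (R - s) *
            ∫⁻ t in Ioo s R, ‖fderiv ℝ u (p + t • unitVector θ)‖ₑ ^ 2) := by gcongr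
      _ = ENNReal.ofReal (R - s) *
            ∫⁻ t in Ioo s R, ENNReal.ofReal s * ‖fderiv ℝ u (p + t • unitVector θ)‖ₑ ^ 2 := by
          rw [lintegral_const_mul' _ _ (by finiteness), mul_left_comm]
      _ ≤ ENNReal.ofReal R *
            ∫⁻ t in Ioo s R, ENNReal.ofReal t * ‖fderiv ℝ u (p + t • unitVector θ)‖ₑ ^ 2 := by
          gcongr ENNReal.ofReal ?_ * ?_
          · linarith [hs.1]
          · exact setLIntegral_mono' measurableSet_Ioo fun t ht => by gcongr; exact ht.1.le
      _ ≤ ENNReal.ofReal R * ray := by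
          gcongr
          exact lintegral_mono_set (Ioo_subset_Ioo_left hs.1.le)
  calc ∫⁻ s in Ioo r R, ENNReal.ofReal s * ‖u (p + s • unitVector θ)‖ₑ ^ 2
      ≤ ∫⁻ _ in Ioo r R, ENNReal.ofReal R * ray := setLIntegral_mono' measurableSet_Ioo pointwise
    _ = ENNReal.ofReal R * ray * ENNReal.ofReal (R - r) := by
        rw [setLIntegral_const, Real.volume_Ioo]
    _ ≤ ENNReal.ofReal R * ray * ENNReal.ofReal R := by gcongr; linarith
    _ = _ := by ring

end AnnulusPoincare

section Hole

lemma exists_dyadic_annulus_le {X : Type*} [PseudoMetricSpace X] [MeasurableSpace X]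
    [OpensMeasurableSpace X] {μ : Measure X} (f : X → ℝ≥0∞) (p : X) {r R : ℝ} {K : ℕ} (hK : 0 < K)
    (hr : 0 ≤ r) (hrR : r ≤ R / 2 ^ K) :
    ∃ a ≥ r, 2 * a ≤ R ∧
      K * ∫⁻ x in annulus p a (2 * a), f x ∂μ ≤ ∫⁻ x in annulus p r R, f x ∂μ := by
  let ρ : ℕ → ℝ := fun j => R / 2 ^ j
  have hR : 0 ≤ R := le_of_not_gt fun h =>
    (hr.trans hrR).not_gt (div_neg_of_neg_of_pos h (by positivity))
  have hρ : Antitone ρ := fun i j hij => by simp only [ρ]; gcongr; norm_num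
  have hdouble : ∀ j, 2 * ρ (j + 1) = ρ j := fun j => by simp only [ρ]; rw [pow_succ]; field_simp
  have hr_le : ∀ j < K, r ≤ ρ (j + 1) := fun j hj => hrR.trans (hρ hj)
  have hle_R : ∀ j, ρ j ≤ R := fun j => (hρ j.zero_le).trans_eq (by simp [ρ])
  have hdisj : Pairwise (Function.onFun Disjoint fun j => annulus p (ρ (j + 1)) (ρ j)) := by
    intro i j hij
    have hpre := (hρ.pairwise_disjoint_on_Ioo_succ hij).preimage fun x => dist x p
    exact hpre.mono (fun _ => mem_annulus.1) fun _ => mem_annulus.1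
  obtain ⟨j, hj, hmin⟩ := Finset.exists_min_image (Finset.range K)
    (fun j => ∫⁻ x in annulus p (ρ (j + 1)) (ρ j), f x ∂μ) ⟨0, Finset.mem_range.2 hK⟩
  refine ⟨ρ (j + 1), hr_le j (Finset.mem_range.1 hj), hdouble j ▸ hle_R j, ?_⟩
  calc K * ∫⁻ x in annulus p (ρ (j + 1)) (2 * ρ (j + 1)), f x ∂μ
      ≤ ∑ i ∈ Finset.range K, ∫⁻ x in annulus p (ρ (i + 1)) (ρ i), f x ∂μ := by
        simpa [hdouble] using Finset.card_nsmul_le_sum _ _ _ hmin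
    _ = ∫⁻ x in ⋃ i ∈ Finset.range K, annulus p (ρ (i + 1)) (ρ i), f x ∂μ :=
        (lintegral_biUnion_finset (hdisj.set_pairwise _)
          (fun i _ => measurableSet_annulus p _ _) f).symm
    _ ≤ ∫⁻ x in annulus p r R, f x ∂μ :=
        lintegral_mono_set <| iUnion₂_subset fun i hi =>
          annulus_subset_annulus p (hr_le i (Finset.mem_range.1 hi)) (hle_R i)

lemma enorm_fderiv_mul_sq_le {E : Type*} [NormedAddCommGroup E] [NormedSpace ℝ E] {χ g : E → ℝ}
    {x : E} (hχ : DifferentiableAt ℝ χ x) (hg : DifferentiableAt ℝ g x)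
    (hχ01 : χ x ∈ Icc (0 : ℝ) 1) :
    ‖fderiv ℝ (fun y => χ y * g y) x‖ₑ ^ 2 ≤
      2 * (‖fderiv ℝ g x‖ₑ ^ 2 + ‖fderiv ℝ χ x‖ₑ ^ 2 * ‖g x‖ₑ ^ 2) := by
  have hχ_le : ‖χ x‖ₑ ≤ 1 := by
    rw [← ofReal_norm, norm_of_nonneg hχ01.1]
    exact ENNReal.ofReal_le_one.2 hχ01.2
  rw [fderiv_fun_mul hχ hg]
  refine (enorm_add_sq_le _ _).trans ?_
  rw [enorm_smul, enorm_smul, mul_pow, mul_pow, mul_comm (‖g x‖ₑ ^ 2)]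
  gcongr
  exact mul_le_of_le_one_left' (pow_le_one' hχ_le 2)

variable (F : Type*) [NormedAddCommGroup F] [NormedSpace ℝ F] [CompleteSpace F] in
lemma exists_lintegral_fderiv_plateau_mul_le :
    ∃ C : ℝ≥0, ∀ u : E2 → F, ContDiff ℝ 1 u → ∀ (p : E2) (a : ℝ), 0 < a → ∃ m,
      ∫⁻ x, ‖fderiv ℝ (plateau p a) x‖ₑ ^ 2 * ‖u x - m‖ₑ ^ 2 ≤
        C * ∫⁻ x in annulus p a (2 * a), ‖fderiv ℝ u x‖ₑ ^ 2 := by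
  obtain ⟨L, hL⟩ := exists_norm_fderiv_plateau_le E2
  obtain ⟨C, hC⟩ := exists_setLIntegral_annulus_enorm_sub_sq_le F
  refine ⟨L.toNNReal ^ 2 * C, fun u hu p a ha => ?_⟩
  obtain ⟨m, hm⟩ := hC u hu p a ha.le
  refine ⟨m, ?_⟩
  have hgrad : ∀ x, ‖fderiv ℝ (plateau p a) x‖ₑ ≤ ENNReal.ofReal (L / a) := fun x => by
    rw [← ofReal_norm]
    exact ENNReal.ofReal_le_ofReal (hL p a ha x)
  have hscale : ENNReal.ofReal (L / a) * ENNReal.ofReal a = L.toNNReal := by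
    rw [← ENNReal.ofReal_mul' ha.le, div_mul_cancel₀ _ ha.ne', ENNReal.ofReal]
  have hoff : ∀ x ∉ annulus p a (2 * a), fderiv ℝ (plateau p a) x = 0 := fun x hx => by
    rcases le_or_gt (dist x p) a with hle | hlt
    · exact fderiv_plateau_eq_zero_of_dist_le ha hle
    · exact fderiv_plateau_eq_zero_of_le_dist ha (not_lt.1 fun h => hx (mem_annulus.2 ⟨hlt, h⟩))
  calc ∫⁻ x, ‖fderiv ℝ (plateau p a) x‖ₑ ^ 2 * ‖u x - m‖ₑ ^ 2
      = ∫⁻ x in annulus p a (2 * a), ‖fderiv ℝ (plateau p a) x‖ₑ ^ 2 * ‖u x - m‖ₑ ^ 2 := by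
        rw [← lintegral_indicator (measurableSet_annulus p _ _), indicator_eq_self.2]
        exact Function.support_subset_iff'.2 fun x hx => by
          rw [hoff x hx, ← ofReal_norm, norm_zero, ENNReal.ofReal_zero,
            zero_pow two_ne_zero, zero_mul]
    _ ≤ ∫⁻ x in annulus p a (2 * a), ENNReal.ofReal (L / a) ^ 2 * ‖u x - m‖ₑ ^ 2 := by
        gcongr with x
        exact hgrad x
    _ = ENNReal.ofReal (L / a) ^ 2 * ∫⁻ x in annulus p a (2 * a), ‖u x - m‖ₑ ^ 2 :=
        lintegral_const_mul' _ _ (by finiteness)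
    _ ≤ ENNReal.ofReal (L / a) ^ 2 * (C * ENNReal.ofReal a ^ 2 *
          ∫⁻ x in annulus p a (2 * a), ‖fderiv ℝ u x‖ₑ ^ 2) := by gcongr
    _ = (ENNReal.ofReal (L / a) * ENNReal.ofReal a) ^ 2 * C *
          ∫⁻ x in annulus p a (2 * a), ‖fderiv ℝ u x‖ₑ ^ 2 := by ring
    _ = _ := by rw [hscale]; push_cast; rfl

variable {E : Type*} [NormedAddCommGroup E] [InnerProductSpace ℝ E] {u : E → ℝ} {a : ℝ}

lemma fderiv_plateau_mul_eq_zero {g : E → ℝ} {p x : E} (hg : DifferentiableAt ℝ g x) (ha : 0 < a)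
    (hx : 2 * a ≤ dist x p) : fderiv ℝ (fun y => plateau p a y * g y) x = 0 := by
  rw [fderiv_fun_mul ((contDiff_plateau p a).differentiable (by simp) x) hg,
    plateau_eq_zero ha hx, fderiv_plateau_eq_zero_of_le_dist ha hx, zero_smul, smul_zero, add_zero]

lemma enorm_fderiv_sub_fderiv_plateau_mul_sq_le (hu : Differentiable ℝ u) (p : E) (ha : 0 < a)
    (m : ℝ) (x : E) :
    ‖fderiv ℝ u x - fderiv ℝ (fun y => plateau p a y * (u y - m)) x‖ₑ ^ 2 ≤
      (Metric.closedBall p a)ᶜ.indicator (fun x => ‖fderiv ℝ u x‖ₑ ^ 2) x +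
        ((annulus p a (2 * a)).indicator (fun x => ‖fderiv ℝ u x‖ₑ ^ 2) x +
          2 * (‖fderiv ℝ (plateau p a) x‖ₑ ^ 2 * ‖u x - m‖ₑ ^ 2)) := by
  have hplateau := (contDiff_plateau p a).differentiable (by simp) x
  have hgap : fderiv ℝ u x - fderiv ℝ (fun y => plateau p a y * (u y - m)) x =
      fderiv ℝ (fun y => (1 - plateau p a y) * (u y - m)) x := by
    rw [fderiv_fun_mul hplateau ((hu x).sub_const m),
      fderiv_fun_mul (hplateau.const_sub 1) ((hu x).sub_const m), fderiv_const_sub,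
      fderiv_sub_const]
    module
  rcases le_or_gt (dist x p) a with hle | hlt
  · rw [fderiv_fun_mul hplateau ((hu x).sub_const m), plateau_eq_one ha hle,
      fderiv_plateau_eq_zero_of_dist_le ha hle, fderiv_sub_const, one_smul, smul_zero, add_zero,
      sub_self, ← ofReal_norm, norm_zero, ENNReal.ofReal_zero, zero_pow two_ne_zero]
    exact zero_le
  have hout : x ∈ (Metric.closedBall p a)ᶜ := by simpa using hlt
  rw [indicator_of_mem hout]
  rcases lt_or_ge (dist x p) (2 * a) with hlt' | hge
  · have h01 : 1 - plateau p a x ∈ Icc (0 : ℝ) 1 := by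
      simpa [and_comm] using plateau_mem_Icc p a x
    rw [indicator_of_mem (mem_annulus.2 ⟨hlt, hlt'⟩), hgap]
    refine (enorm_fderiv_mul_sq_le (hplateau.const_sub 1) ((hu x).sub_const m) h01).trans_eq ?_
    rw [fderiv_const_sub, fderiv_sub_const, enorm_neg]
    ring
  · rw [fderiv_plateau_mul_eq_zero ((hu x).sub_const m) ha hge, sub_zero]
    exact le_self_add

variable [FiniteDimensional ℝ E] [MeasurableSpace E] [BorelSpace E] {μ : Measure E}

lemma setLIntegral_fderiv_sub_fderiv_plateau_mul_le (hu : ContDiff ℝ 1 u) (p : E) (ha : 0 < a)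
    (m R : ℝ) :
    ∫⁻ x in Metric.ball p R, ‖fderiv ℝ u x - fderiv ℝ (fun y => plateau p a y * (u y - m)) x‖ₑ ^ 2
        ∂μ ≤ (∫⁻ x in annulus p a R, ‖fderiv ℝ u x‖ₑ ^ 2 ∂μ) +
      ((∫⁻ x in annulus p a (2 * a), ‖fderiv ℝ u x‖ₑ ^ 2 ∂μ) +
        2 * ∫⁻ x, ‖fderiv ℝ (plateau p a) x‖ₑ ^ 2 * ‖u x - m‖ₑ ^ 2 ∂μ) := by
  have hgrad : Measurable fun x => ‖fderiv ℝ u x‖ₑ ^ 2 :=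
    (hu.continuous_fderiv (by simp)).enorm.measurable.pow_const 2
  have hout : MeasurableSet (Metric.closedBall p a)ᶜ := measurableSet_closedBall.compl
  have hann := measurableSet_annulus p a (2 * a)
  refine (lintegral_mono fun x =>
    enorm_fderiv_sub_fderiv_plateau_mul_sq_le (hu.differentiable (by simp)) p ha m x).trans ?_
  rw [lintegral_add_left (hgrad.indicator hout), lintegral_add_left (hgrad.indicator hann),
    lintegral_indicator hout, Measure.restrict_restrict hout, inter_comm, ← Set.sdiff_eq]
  gcongr ?_ + (?_ + ?_)
  · rfl
  · exact (setLIntegral_le_lintegral _ _).trans_eq (lintegral_indicator hann _)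
  · rw [lintegral_const_mul' _ _ (by finiteness)]
    gcongr
    exact Measure.restrict_le_self

lemma setLIntegral_fderiv_plateau_mul_le (hu : ContDiff ℝ 1 u) (p : E) (a m : ℝ) (s : Set E) :
    ∫⁻ x in s, ‖fderiv ℝ (fun y => plateau p a y * (u y - m)) x‖ₑ ^ 2 ∂μ ≤
      2 * ((∫⁻ x in s, ‖fderiv ℝ u x‖ₑ ^ 2 ∂μ) +
        ∫⁻ x, ‖fderiv ℝ (plateau p a) x‖ₑ ^ 2 * ‖u x - m‖ₑ ^ 2 ∂μ) := by
  have hgrad : Measurable fun x => ‖fderiv ℝ u x‖ₑ ^ 2 :=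
    (hu.continuous_fderiv (by simp)).enorm.measurable.pow_const 2
  calc ∫⁻ x in s, ‖fderiv ℝ (fun y => plateau p a y * (u y - m)) x‖ₑ ^ 2 ∂μ
      ≤ ∫⁻ x in s, 2 * (‖fderiv ℝ u x‖ₑ ^ 2 +
          ‖fderiv ℝ (plateau p a) x‖ₑ ^ 2 * ‖u x - m‖ₑ ^ 2) ∂μ :=
        lintegral_mono fun x => by
          simpa only [fderiv_sub_const] using enorm_fderiv_mul_sq_le
            ((contDiff_plateau p a).differentiable (by simp) x)
            ((hu.differentiable (by simp) x).sub_const m) (plateau_mem_Icc p a x)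
    _ = 2 * ((∫⁻ x in s, ‖fderiv ℝ u x‖ₑ ^ 2 ∂μ) +
          ∫⁻ x in s, ‖fderiv ℝ (plateau p a) x‖ₑ ^ 2 * ‖u x - m‖ₑ ^ 2 ∂μ) := by
        rw [lintegral_const_mul' _ _ (by finiteness), lintegral_add_left hgrad]
    _ ≤ _ := by
        gcongr
        exact Measure.restrict_le_self

lemma exists_hole_filling : ∃ C : ℝ≥0, ∀ u : E2 → ℝ, ContDiff ℝ (⊤ : ℕ∞) u →
    ∀ (p : E2) (r R : ℝ) (K : ℕ), 0 < K → 0 < r → r ≤ R / 2 ^ K →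
    ∃ v : E2 → ℝ, ContDiff ℝ (⊤ : ℕ∞) v ∧
      (∀ x, R ≤ dist x p → v x = 0 ∧ fderiv ℝ v x = 0) ∧
      K * ∫⁻ x in Metric.ball p R, ‖fderiv ℝ u x - fderiv ℝ v x‖ₑ ^ 2 ≤
        (K + C) * ∫⁻ x in annulus p r R, ‖fderiv ℝ u x‖ₑ ^ 2 ∧
      ∫⁻ x in annulus p r R, ‖v x‖ₑ ^ 2 ≤
        C * ENNReal.ofReal R ^ 2 * ∫⁻ x in annulus p r R, ‖fderiv ℝ u x‖ₑ ^ 2 := by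
  obtain ⟨C, hC⟩ := exists_lintegral_fderiv_plateau_mul_le ℝ
  refine ⟨2 + 2 * C, fun u hu p r R K hK hr hrR => ?_⟩
  have hu1 : ContDiff ℝ 1 u := hu.of_le (by simp)
  obtain ⟨a, hra, haR, hdyadic⟩ := exists_dyadic_annulus_le (μ := volume)
    (fun x => ‖fderiv ℝ u x‖ₑ ^ 2) p hK hr.le hrR
  have ha : 0 < a := hr.trans_le hra
  obtain ⟨m, hcost⟩ := hC u hu1 p a ha
  have hv : ContDiff ℝ (⊤ : ℕ∞) fun y => plateau p a y * (u y - m) :=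
    (contDiff_plateau p a).mul (hu.sub contDiff_const)
  have hzero : ∀ x, R ≤ dist x p → plateau p a x * (u x - m) = 0 := fun x hx => by
    rw [plateau_eq_zero ha (haR.trans hx), zero_mul]
  refine ⟨_, hv, fun x hx => ⟨hzero x hx, fderiv_plateau_mul_eq_zero
    ((hu.differentiable (by simp) x).sub_const m) ha (haR.trans hx)⟩, ?_, ?_⟩
  · set energy := ∫⁻ x in annulus p r R, ‖fderiv ℝ u x‖ₑ ^ 2
    set dyadic := ∫⁻ x in annulus p a (2 * a), ‖fderiv ℝ u x‖ₑ ^ 2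
    calc _ ≤ K * (energy + (dyadic + 2 * (C * dyadic))) := by
          gcongr
          refine (setLIntegral_fderiv_sub_fderiv_plateau_mul_le hu1 p ha m R).trans ?_
          gcongr
          exact lintegral_mono_set (annulus_subset_annulus p hra le_rfl)
      _ = K * energy + (1 + 2 * C) * (K * dyadic) := by ring
      _ ≤ K * energy + (2 + 2 * C) * energy := by gcongr; exact one_le_two
      _ = _ := by push_cast; ring
  · have hR : 0 < R := by linarith
    refine (setLIntegral_annulus_enorm_sq_le_of_eq_zero (hv.of_le (by simp)) p hr.le hR.le
      fun x hx => hzero x hx.ge).trans ?_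
    set energy := ∫⁻ x in annulus p r R, ‖fderiv ℝ u x‖ₑ ^ 2
    have hsub : ∫⁻ x in annulus p a (2 * a), ‖fderiv ℝ u x‖ₑ ^ 2 ≤ energy :=
      lintegral_mono_set (annulus_subset_annulus p hra haR)
    calc _ ≤ ENNReal.ofReal R ^ 2 * (2 * (energy + C * energy)) := by
          gcongr
          exact (setLIntegral_fderiv_plateau_mul_le hu1 p a m _).trans 
            (by gcongr; exact hcost.trans (by gcongr))
      _ = _ := by push_cast; ring

end Hole

section NeumannLowerBound

lemma setLIntegral_eq_sdiff_add_sum {α ι : Type*} [MeasurableSpace α] {μ : Measure α} (s : Set α)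
    {I : Finset ι} {B : ι → Set α} (hB : ∀ i ∈ I, MeasurableSet (B i))
    (hdisj : (I : Set ι).PairwiseDisjoint B) (f : α → ℝ≥0∞) :
    ∫⁻ x in s, f x ∂μ =
      (∫⁻ x in s \ ⋃ i ∈ I, B i, f x ∂μ) + ∑ i ∈ I, ∫⁻ x in B i ∩ s, f x ∂μ := by
  have hpieces := lintegral_biUnion_finset (μ := μ.restrict s) hdisj hB f
  rw [Finset.sum_congr rfl fun i hi => by rw [Measure.restrict_restrict (hB i hi)],
    Measure.restrict_restrict (I.measurableSet_biUnion hB), inter_comm] at hpieces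
  rw [← hpieces, add_comm, lintegral_inter_add_sdiff f s (I.measurableSet_biUnion hB)]

section Packing

variable {X : Type*} [MetricSpace X] {Ω : Set X} {P : Finset X} {r R : ℝ}

lemma IsBallPacking.pairwiseDisjoint_ball (hP : IsBallPacking Ω P R) :
    (P : Set X).PairwiseDisjoint fun p => Metric.ball p R := fun _ hp _ hq hpq =>
  Metric.ball_disjoint_ball (by linarith [hP.two_mul_lt_dist _ hp _ hq hpq])

lemma IsBallPacking.ball_inter_perforate (hP : IsBallPacking Ω P R) (hrR : r < R) {p : X}
    (hp : p ∈ P) : Metric.ball p R ∩ perforate Ω P r = annulus p r R := by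
  ext x
  simp only [mem_inter_iff, mem_perforate, mem_annulus, Metric.mem_ball]
  refine ⟨fun ⟨hx, _, hr⟩ => ⟨hr p hp, hx⟩, fun ⟨hr, hx⟩ =>
    ⟨hx, hP.closedBall_subset p hp hx.le, fun q hq => ?_⟩⟩
  rcases eq_or_ne q p with rfl | hqp
  · exact hr
  · exact hrR.trans (hP.lt_dist hp hq hqp hx.le)

lemma perforate_sdiff_balls (Ω : Set X) (P : Finset X) (hrR : r < R) :
    perforate Ω P r \ ⋃ p ∈ P, Metric.ball p R = Ω \ ⋃ p ∈ P, Metric.ball p R := by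
  rw [perforate, sdiff_sdiff, union_eq_self_of_subset_left]
  exact iUnion₂_mono fun p _ => Metric.closedBall_subset_ball hrR

lemma IsBallPacking.sum_eq_of_dist_lt {M : Type*} [AddCommMonoid M] (hP : IsBallPacking Ω P R)
    {g : X → M} {p x : X} (hg : ∀ q, R ≤ dist x q → g q = 0) (hp : p ∈ P) (hx : dist x p < R) :
    ∑ q ∈ P, g q = g p :=
  Finset.sum_eq_single_of_mem p hp fun q hq hqp => hg q (hP.lt_dist hp hq hqp hx.le).le

variable [MeasurableSpace X] [OpensMeasurableSpace X] {μ : Measure X}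

lemma IsBallPacking.setLIntegral_eq (hP : IsBallPacking Ω P R) (f : X → ℝ≥0∞) :
    ∫⁻ x in Ω, f x ∂μ = (∫⁻ x in Ω \ ⋃ p ∈ P, Metric.ball p R, f x ∂μ) +
      ∑ p ∈ P, ∫⁻ x in Metric.ball p R, f x ∂μ := by
  rw [setLIntegral_eq_sdiff_add_sum Ω (fun p _ => measurableSet_ball) hP.pairwiseDisjoint_ball]
  congr 1
  refine Finset.sum_congr rfl fun p hp => ?_
  rw [inter_eq_left.2 (Metric.ball_subset_closedBall.trans (hP.closedBall_subset p hp))]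

lemma IsBallPacking.setLIntegral_perforate_eq (hP : IsBallPacking Ω P R) (hrR : r < R)
    (f : X → ℝ≥0∞) :
    ∫⁻ x in perforate Ω P r, f x ∂μ = (∫⁻ x in Ω \ ⋃ p ∈ P, Metric.ball p R, f x ∂μ) +
      ∑ p ∈ P, ∫⁻ x in annulus p r R, f x ∂μ := by
  rw [setLIntegral_eq_sdiff_add_sum _ (fun p _ => measurableSet_ball) hP.pairwiseDisjoint_ball,
    perforate_sdiff_balls Ω P hrR]
  congr 1
  exact Finset.sum_congr rfl fun p hp => by rw [hP.ball_inter_perforate hrR hp]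

end Packing

lemma lt_of_pos_of_le_div_two_pow {r R : ℝ} {K : ℕ} (hr : 0 < r) (hK : 0 < K)
    (hrR : r ≤ R / 2 ^ K) : r < R := by
  rw [le_div_iff₀ (by positivity)] at hrR
  exact (lt_mul_of_one_lt_right hr (one_lt_pow₀ one_lt_two hK.ne')).trans_le hrR

lemma exists_perforation_filling : ∃ C : ℝ≥0, ∀ u : E2 → ℝ, ContDiff ℝ (⊤ : ℕ∞) u →
    ∀ (Ω : Set E2) (P : Finset E2) (r R : ℝ) (K : ℕ), IsOpen Ω → IsBallPacking Ω P R → 0 < K →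
    0 < r → r ≤ R / 2 ^ K → ∃ w : E2 → ℝ, ContDiff ℝ (⊤ : ℕ∞) w ∧
      K * ∫⁻ x in Ω, ‖fderiv ℝ w x‖ₑ ^ 2 ≤
        (K + C) * ∫⁻ x in perforate Ω P r, ‖fderiv ℝ u x‖ₑ ^ 2 ∧
      ∫⁻ x in perforate Ω P r, ‖w x - u x‖ₑ ^ 2 ≤
        C * ENNReal.ofReal R ^ 2 * ∫⁻ x in perforate Ω P r, ‖fderiv ℝ u x‖ₑ ^ 2 := by
  obtain ⟨C, hC⟩ := exists_hole_filling
  refine ⟨C, fun u hu Ω P r R K hΩ hP hK hr hrR => ?_⟩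
  choose v hv hv_zero hv_energy hv_error using fun p => hC u hu p r R K hK hr hrR
  have hoff : MeasurableSet (Ω \ ⋃ p ∈ P, Metric.ball p R) :=
    hΩ.measurableSet.diff (P.measurableSet_biUnion fun _ _ => measurableSet_ball)
  have hfar : ∀ x ∈ Ω \ ⋃ p ∈ P, Metric.ball p R, ∀ q ∈ P, R ≤ dist x q := fun x hx q hq =>
    not_lt.1 fun h => hx.2 (mem_biUnion hq h)
  have hgrad : ∀ x, fderiv ℝ (fun y => u y - ∑ q ∈ P, v q y) x =
      fderiv ℝ u x - ∑ q ∈ P, fderiv ℝ (v q) x := fun x => by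
    have hv_diff : ∀ q ∈ P, DifferentiableAt ℝ (v q) x := fun q _ =>
      (hv q).differentiable (by simp) x
    rw [fderiv_fun_sub (hu.differentiable (by simp) x) (DifferentiableAt.fun_sum hv_diff),
      fderiv_fun_sum hv_diff]
  refine ⟨fun x => u x - ∑ q ∈ P, v q x, hu.sub (ContDiff.sum fun q _ => hv q), ?_, ?_⟩
  · rw [hP.setLIntegral_eq, hP.setLIntegral_perforate_eq (lt_of_pos_of_le_div_two_pow hr hK hrR),
      mul_add, mul_add, Finset.mul_sum, Finset.mul_sum]
    gcongr ?_ + ∑ p ∈ P, ?_ with p hp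
    · gcongr ?_ * ?_
      · exact le_self_add
      · refine (setLIntegral_congr_fun hoff fun x hx => ?_).le
        simp only [hgrad, Finset.sum_eq_zero fun q hq => (hv_zero q x (hfar x hx q hq)).2, sub_zero]
    · refine le_of_eq_of_le ?_ (hv_energy p)
      congr 1
      refine setLIntegral_congr_fun measurableSet_ball fun x hx => ?_
      simp only [hgrad, hP.sum_eq_of_dist_lt (fun q hq => (hv_zero q x hq).2) hp hx]
  · simp only [sub_sub_cancel_left, enorm_neg]
    rw [hP.setLIntegral_perforate_eq (lt_of_pos_of_le_div_two_pow hr hK hrR),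
      hP.setLIntegral_perforate_eq (lt_of_pos_of_le_div_two_pow hr hK hrR), mul_add,
      Finset.mul_sum]
    gcongr ?_ + ∑ p ∈ P, ?_ with p hp
    · refine (setLIntegral_eq_zero hoff fun x hx => ?_).trans_le zero_le
      simp [Finset.sum_eq_zero fun q hq => (hv_zero q x (hfar x hx q hq)).1]
    · refine le_of_eq_of_le ?_ (hv_error p)
      refine setLIntegral_congr_fun (measurableSet_annulus p r R) fun x hx => ?_
      simp only [hP.sum_eq_of_dist_lt (fun q hq => (hv_zero q x hq).1) hp (mem_annulus.1 hx).2]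

variable {Ω Ω' : Set E2}

lemma exists_integral_perforation_filling : ∃ C : ℝ, 0 ≤ C ∧ ∀ u : E2 → ℝ,
    ContDiff ℝ (⊤ : ℕ∞) u → ∀ (Ω : Set E2) (P : Finset E2) (r R : ℝ) (K : ℕ), IsOpen Ω →
    Bornology.IsBounded Ω → IsBallPacking Ω P R → 0 < K → 0 < r → r ≤ R / 2 ^ K →
    ∃ w : E2 → ℝ, ContDiff ℝ (⊤ : ℕ∞) w ∧
      K * ∫ x in Ω, ‖fderiv ℝ w x‖ ^ 2 ≤
        (K + C) * ∫ x in perforate Ω P r, ‖fderiv ℝ u x‖ ^ 2 ∧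
      ∫ x in perforate Ω P r, (w x - u x) ^ 2 ≤
        C * R ^ 2 * ∫ x in perforate Ω P r, ‖fderiv ℝ u x‖ ^ 2 := by
  obtain ⟨C, hC⟩ := exists_perforation_filling
  refine ⟨C, C.2, fun u hu Ω P r R K hΩ hb hP hK hr hrR => ?_⟩
  obtain ⟨w, hw, henergy, herror⟩ := hC u hu Ω P r R K hΩ hP hK hr hrR
  have hu_cont : Continuous (fderiv ℝ u) := hu.continuous_fderiv (by simp)
  have hu_fin : ∫⁻ x in perforate Ω P r, ‖fderiv ℝ u x‖ₑ ^ 2 ≠ ⊤ :=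
    lintegral_enorm_sq_ne_top <| integrableOn_of_continuous_of_isBounded
      (hb.subset (perforate_subset Ω P r)) (hu_cont.norm.pow 2)
  have hR : 0 ≤ R := (hr.trans (lt_of_pos_of_le_div_two_pow hr hK hrR)).le
  refine ⟨w, hw, ?_, ?_⟩
  · rw [integral_norm_sq_eq_toReal (hw.continuous_fderiv (by simp)).aestronglyMeasurable,
      integral_norm_sq_eq_toReal hu_cont.aestronglyMeasurable]
    simpa [ENNReal.toReal_add] using ENNReal.toReal_mono (by finiteness) henergy
  · rw [integral_sq_eq_toReal (hw.continuous.fun_sub hu.continuous).aestronglyMeasurable,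
      integral_norm_sq_eq_toReal hu_cont.aestronglyMeasurable]
    simpa [hR] using ENNReal.toReal_mono (by finiteness) herror

lemma sub_sq_le_one_add_mul {τ : ℝ} (hτ : 0 < τ) (X Y : ℝ) :
    (X - Y) ^ 2 ≤ (1 + τ) * X ^ 2 + (1 + 1 / τ) * Y ^ 2 := by
  have hgap : (1 + τ) * X ^ 2 + (1 + 1 / τ) * Y ^ 2 - (X - Y) ^ 2 = (τ * X + Y) ^ 2 / τ := by
    field_simp; ring
  linarith [show 0 ≤ (τ * X + Y) ^ 2 / τ by positivity]

lemma nEig1_mul_le_of_extension (hb : Bornology.IsBounded Ω) (hsub : Ω' ⊆ Ω) {u w : E2 → ℝ}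
    (hu : Continuous u) (hw : ContDiff ℝ (⊤ : ℕ∞) w) (hmean : ∫ x in Ω', u x = 0) {τ : ℝ}
    (hτ : 0 < τ) :
    nEig1 Ω * (∫ x in Ω', u x ^ 2) ≤ (1 + τ) * (∫ x in Ω, ‖fderiv ℝ w x‖ ^ 2) +
      (1 + 1 / τ) * nEig1 Ω * ∫ x in Ω', (w x - u x) ^ 2 := by
  have : IsFiniteMeasure (volume.restrict Ω) := ⟨by simpa using hb.measure_lt_top⟩
  have hint {f : E2 → ℝ} (hf : Continuous f) : IntegrableOn f Ω' :=
    integrableOn_of_continuous_of_isBounded (hb.subset hsub) hf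
  set c := ⨍ x in Ω, w x
  have hw_cont := hw.continuous
  have hpoincare : nEig1 Ω * ∫ x in Ω, (w x - c) ^ 2 ≤ ∫ x in Ω, ‖fderiv ℝ w x‖ ^ 2 := by
    simpa only [fderiv_sub_const] using nEig1_mul_le (Ω := Ω) (hw.sub contDiff_const)
      (integral_sub_average (volume.restrict Ω) w)
  have hmono : ∫ x in Ω', (w x - c) ^ 2 ≤ ∫ x in Ω, (w x - c) ^ 2 :=
    setIntegral_mono_set (integrableOn_of_continuous_of_isBounded hb (by fun_prop))
      (Eventually.of_forall fun x => sq_nonneg _) hsub.eventuallyLE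
  have hsplit : ∫ x in Ω', u x ^ 2 ≤
      (1 + τ) * (∫ x in Ω', (w x - c) ^ 2) + (1 + 1 / τ) * ∫ x in Ω', (w x - u x) ^ 2 := by
    calc ∫ x in Ω', u x ^ 2
        ≤ ∫ x in Ω', ((1 + τ) * (w x - c) ^ 2 + (1 + 1 / τ) * (w x - u x) ^ 2 + 2 * c * u x) := by
          refine integral_mono (hint (by fun_prop)) (hint (by fun_prop)) fun x => ?_
          have hyoung := sub_sq_le_one_add_mul hτ (w x - c) (w x - u x)
          dsimp only
          linarith [sq_nonneg c, show (w x - c - (w x - u x)) ^ 2 = u x ^ 2 - 2 * c * u x + c ^ 2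
            by ring]
      _ = _ := by
          rw [integral_add (hint (by fun_prop)) (hint (by fun_prop)),
            integral_add (hint (by fun_prop)) (hint (by fun_prop)), integral_const_mul,
            integral_const_mul, integral_const_mul, hmean, mul_zero, add_zero]
  have hμ := nEig1_nonneg Ω
  calc nEig1 Ω * (∫ x in Ω', u x ^ 2)
      ≤ nEig1 Ω * ((1 + τ) * (∫ x in Ω, (w x - c) ^ 2) +
          (1 + 1 / τ) * ∫ x in Ω', (w x - u x) ^ 2) := by
        gcongr; exact hsplit.trans (by gcongr)
    _ = (1 + τ) * (nEig1 Ω * ∫ x in Ω, (w x - c) ^ 2) +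
          (1 + 1 / τ) * nEig1 Ω * ∫ x in Ω', (w x - u x) ^ 2 := by ring
    _ ≤ _ := by gcongr

lemma IsBallPacking.perforate_nonempty {P : Finset E2} {r R : ℝ} (hP : IsBallPacking Ω P R)
    (hne : Ω.Nonempty) (hR : 0 ≤ R) (hrR : r < R) : (perforate Ω P r).Nonempty := by
  rcases P.eq_empty_or_nonempty with rfl | ⟨p, hp⟩
  · simpa [perforate] using hne
  have hdist : dist (p + R • unitVector 0) p = R := dist_add_smul_unitVector p hR 0
  refine ⟨p + R • unitVector 0, mem_perforate.2
    ⟨hP.closedBall_subset p hp (Metric.mem_closedBall.2 hdist.le), fun q hq => ?_⟩⟩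
  rcases eq_or_ne q p with rfl | hqp
  · exact hrR.trans_eq hdist.symm
  · exact hrR.trans (hP.lt_dist hp hq hqp hdist.le)

lemma exists_nEig1_le_mul_nEig1_perforate : ∃ C : ℝ, 0 ≤ C ∧ ∀ (Ω : Set E2) (P : Finset E2)
    (r R : ℝ) (K : ℕ) (τ : ℝ), IsOpen Ω → Ω.Nonempty → Bornology.IsBounded Ω →
    IsBallPacking Ω P R → 0 < K → 0 < r → r ≤ R / 2 ^ K → 0 < τ →
    nEig1 Ω ≤ ((1 + τ) * (1 + C / K) + (1 + 1 / τ) * nEig1 Ω * (C * R ^ 2)) *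
      nEig1 (perforate Ω P r) := by
  obtain ⟨C, hC₀, hC⟩ := exists_integral_perforation_filling
  refine ⟨C, hC₀, fun Ω P r R K τ hΩ hne hb hP hK hr hrR hτ => ?_⟩
  have hrR' := lt_of_pos_of_le_div_two_pow hr hK hrR
  have hμ := nEig1_nonneg Ω
  rw [← div_le_iff₀' (by positivity)]
  refine le_nEig1 (isOpen_perforate hΩ P r) (hP.perforate_nonempty hne (hr.trans hrR').le hrR')
    (hb.subset (perforate_subset Ω P r)) fun u hu hmean => ?_
  obtain ⟨w, hw, henergy, herror⟩ := hC u hu Ω P r R K hΩ hb hP hK hr hrR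
  rw [div_mul_eq_mul_div, div_le_iff₀' (by positivity)]
  have henergy' : ∫ x in Ω, ‖fderiv ℝ w x‖ ^ 2 ≤
      (1 + C / K) * ∫ x in perforate Ω P r, ‖fderiv ℝ u x‖ ^ 2 := by
    have hK' : (0 : ℝ) < K := by exact_mod_cast hK
    rwa [one_add_div hK'.ne', div_mul_eq_mul_div, le_div_iff₀' hK']
  calc nEig1 Ω * (∫ x in perforate Ω P r, u x ^ 2)
      ≤ (1 + τ) * (∫ x in Ω, ‖fderiv ℝ w x‖ ^ 2) +
          (1 + 1 / τ) * nEig1 Ω * ∫ x in perforate Ω P r, (w x - u x) ^ 2 :=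
        nEig1_mul_le_of_extension hb (perforate_subset Ω P r) hu.continuous hw hmean hτ
    _ ≤ (1 + τ) * ((1 + C / K) * ∫ x in perforate Ω P r, ‖fderiv ℝ u x‖ ^ 2) +
          (1 + 1 / τ) * nEig1 Ω *
            (C * R ^ 2 * ∫ x in perforate Ω P r, ‖fderiv ℝ u x‖ ^ 2) := by gcongr
    _ = _ := by ring

lemma exists_sub_le_nEig1_perforate (hΩ : IsOpen Ω) (hne : Ω.Nonempty) (hb : Bornology.IsBounded Ω)
    {δ : ℝ} (hδ : 0 < δ) :
    ∃ R₀ > 0, ∀ᶠ K : ℕ in atTop, ∀ (P : Finset E2) (r R : ℝ), IsBallPacking Ω P R → R ≤ R₀ →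
      0 < r → r ≤ R / 2 ^ K → nEig1 Ω - δ ≤ nEig1 (perforate Ω P r) := by
  obtain ⟨C, hC₀, hC⟩ := exists_nEig1_le_mul_nEig1_perforate
  have hμ := nEig1_nonneg Ω
  set μ := nEig1 Ω
  have hτ_lim : ∀ᶠ τ in nhds (0 : ℝ), (μ - δ) * ((1 + τ) ^ 2 + τ) < μ :=
    (by fun_prop : Continuous fun τ : ℝ => (μ - δ) * ((1 + τ) ^ 2 + τ)).continuousAt
      |>.eventually_lt_const (by simpa using hδ)
  obtain ⟨τ, hτ_small, hτ⟩ := ((hτ_lim.filter_mono nhdsWithin_le_nhds).and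
    (self_mem_nhdsWithin (s := Ioi (0 : ℝ)))).exists
  have hR_lim : ∀ᶠ R in nhds (0 : ℝ), (1 + 1 / τ) * μ * (C * R ^ 2) < τ :=
    (by fun_prop : Continuous fun R : ℝ => (1 + 1 / τ) * μ * (C * R ^ 2)).continuousAt
      |>.eventually_lt_const (by simpa using hτ)
  obtain ⟨R₀, hR₀_small, hR₀⟩ := ((hR_lim.filter_mono nhdsWithin_le_nhds).and
    (self_mem_nhdsWithin (s := Ioi (0 : ℝ)))).exists
  refine ⟨R₀, hR₀, ?_⟩
  filter_upwards [eventually_gt_atTop 0,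
    (tendsto_const_div_atTop_nhds_zero_nat C).eventually_lt_const hτ] with K hK hCK P r R hP hRR₀
    hr hrR
  have hR : 0 < R := hr.trans (lt_of_pos_of_le_div_two_pow hr hK hrR)
  have hm := nEig1_nonneg (perforate Ω P r)
  have hR_small : (1 + 1 / τ) * μ * (C * R ^ 2) ≤ τ := le_trans (by gcongr) hR₀_small.le
  have hQ : (0 : ℝ) < (1 + τ) ^ 2 + τ := add_pos (pow_pos (add_pos one_pos hτ) 2) hτ
  refine le_of_mul_le_mul_right ?_ hQ
  calc (μ - δ) * ((1 + τ) ^ 2 + τ)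
      ≤ ((1 + τ) * (1 + C / K) + (1 + 1 / τ) * μ * (C * R ^ 2)) * nEig1 (perforate Ω P r) :=
        hτ_small.le.trans (hC Ω P r R K τ hΩ hne hb hP hK hr hrR hτ)
    _ ≤ ((1 + τ) * (1 + τ) + τ) * nEig1 (perforate Ω P r) := by gcongr
    _ = _ := by ring

end NeumannLowerBound

section Closure

lemma exists_le_and_lt_mul_of_le_mul_succ {f : ℕ → ℝ} {b q : ℝ} (h0 : b < f 0)
    (hle : ∃ k, f k ≤ b) (hstep : ∀ k, f k ≤ q * f (k + 1)) : ∃ k, f k ≤ b ∧ b < q * f k := by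
  classical
  obtain ⟨j, hj⟩ := Nat.exists_eq_succ_of_ne_zero (n := Nat.find hle) fun h =>
    h0.not_ge (h ▸ Nat.find_spec hle)
  have hj_lt : b < f j := not_le.1 (Nat.find_min hle (hj ▸ j.lt_succ_self))
  exact ⟨j.succ, hj ▸ Nat.find_spec hle, hj_lt.trans_le (hstep j)⟩

variable {Ω : Set E2}

lemma IsBallPacking.exists_dEig1_perforate_mem_Icc {P : Finset E2} {R s a b : ℝ}
    (hP : IsBallPacking Ω P R) (hΩ : IsOpen Ω) (hne : Ω.Nonempty) (hb : Bornology.IsBounded Ω)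
    (hs : 0 < s) (hsR : s ≤ R / 2) (ha : dEig1 Ω ≤ a) (hab : a < b)
    (hlarge : b < dEig1 (perforate Ω P s)) :
    ∃ r ∈ Ioc 0 s, dEig1 (perforate Ω P r) ∈ Icc a b := by
  have ha₀ : 0 ≤ a := (dEig1_nonneg Ω).trans ha
  have hη : 0 < (b - a) / (a + 1) := div_pos (sub_pos.2 hab) (by linarith)
  set η := (b - a) / (a + 1)
  have hηab : (1 + η) * a ≤ b := by
    have : η * (a + 1) = b - a := div_mul_cancel₀ _ (by linarith)
    linarith
  obtain ⟨t, ht, hshrink⟩ := hP.exists_dEig1_perforate_shrink_le hΩ hb (by linarith) hη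
  obtain ⟨r₀, hr₀, hsmall⟩ := exists_dEig1_perforate_le hΩ hne P (sub_pos.2 hab)
  have ht₀ : 0 < 1 - t := sub_pos.2 ht.2
  have hradius (k : ℕ) : (1 - t) ^ k * s ∈ Ioc 0 s :=
    ⟨by positivity, mul_le_of_le_one_left hs.le (pow_le_one₀ ht₀.le (by linarith [ht.1]))⟩
  have hstep (k : ℕ) : dEig1 (perforate Ω P ((1 - t) ^ k * s)) ≤
      (1 + η) * dEig1 (perforate Ω P ((1 - t) ^ (k + 1) * s)) := by
    rw [pow_succ', mul_assoc]
    have hle : (1 - t) ^ k * s ≤ R / 2 := (hradius k).2.trans hsR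
    exact hshrink _ (hradius k).1.le hle (hP.perforate_nonempty hne (by linarith) (by linarith))
  obtain ⟨k, hk⟩ := exists_pow_lt_of_lt_one (div_pos hr₀ hs) (by linarith [ht.1] : 1 - t < 1)
  have hreach : dEig1 (perforate Ω P ((1 - t) ^ k * s)) ≤ b := by
    linarith [hsmall _ ((lt_div_iff₀ hs).1 hk).le]
  obtain ⟨j, hj_le, hj_lt⟩ := exists_le_and_lt_mul_of_le_mul_succ
    (f := fun k => dEig1 (perforate Ω P ((1 - t) ^ k * s))) (by simpa using hlarge) ⟨k, hreach⟩
    hstep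
  exact ⟨_, hradius j,
    le_of_mul_le_mul_left (hηab.trans hj_lt.le) (by linarith : (0 : ℝ) < 1 + η), hj_le⟩

/-- The triples `(|Ω'|, λ₁(Ω'), μ₁(Ω'))`, where `Ω'` runs through the perforations of `Ω` by
discs of a common radius strictly smaller than the radius of the underlying packing. -/
def perforationTriples (Ω : Set E2) : Set (ℝ × ℝ × ℝ) :=
  { q | ∃ P r R, IsBallPacking Ω P R ∧ 0 < r ∧ r < R ∧
    q = (volume.real (perforate Ω P r), dEig1 (perforate Ω P r), nEig1 (perforate Ω P r)) }

lemma IsBallPacking.volumeReal_holes_le_of_le_div_two_pow {P : Finset E2} {r R : ℝ} {K : ℕ}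
    (hP : IsBallPacking Ω P R) (hb : Bornology.IsBounded Ω) (hr : 0 ≤ r) (hR : 0 < R)
    (hrR : r ≤ R / 2 ^ K) :
    volume.real (Ω \ perforate Ω P r) ≤ (1 / 2 ^ K) ^ 2 * volume.real Ω := by
  refine (hP.volumeReal_holes_le hb hr hR).trans ?_
  have hratio : r / R ≤ 1 / 2 ^ K := by rwa [div_le_iff₀ hR, one_div_mul_eq_div]
  gcongr

lemma exists_ballPacking_dEig1_nEig1_close (hΩ : IsOpen Ω) (hne : Ω.Nonempty)
    (hb : Bornology.IsBounded Ω) {a δ η : ℝ} (ha : dEig1 Ω ≤ a) (hδ : 0 < δ) (hη : 0 < η) :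
    ∃ P r R, IsBallPacking Ω P R ∧ 0 < r ∧ r < R ∧ volume.real (Ω \ perforate Ω P r) ≤ η ∧
      dEig1 (perforate Ω P r) ∈ Icc a (a + δ) ∧ nEig1 Ω - δ ≤ nEig1 (perforate Ω P r) := by
  obtain ⟨R₁, hR₁, hneumann⟩ := exists_sub_le_nEig1_perforate hΩ hne hb hδ
  have hvolume : Tendsto (fun K : ℕ => (1 / 2 ^ K : ℝ) ^ 2 * volume.real Ω) atTop (nhds 0) := by
    have hpow : Tendsto (fun K : ℕ => (1 / 2 ^ K : ℝ)) atTop (nhds 0) := by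
      simpa only [one_div_pow] using tendsto_pow_atTop_nhds_zero_of_lt_one
        (by norm_num : (0 : ℝ) ≤ 1 / 2) (by norm_num)
    simpa using (hpow.pow 2).mul_const (volume.real Ω)
  obtain ⟨K, hneumann, hvolume, hK⟩ := (hneumann.and
    ((hvolume.eventually_le_const hη).and (eventually_gt_atTop 0))).exists
  have hκ : (1 / 2 ^ K : ℝ) ≤ 1 / 2 := by
    gcongr
    exact le_self_pow₀ one_le_two hK.ne'
  obtain ⟨R₂, hR₂, hdirichlet⟩ := exists_le_dEig1_perforate hΩ hb
    (by positivity : (0 : ℝ) < 1 / 2 ^ K) (by linarith) (a + δ + 1)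
  obtain ⟨R, hR, hR_le⟩ := exists_between (lt_min hR₁ hR₂)
  obtain ⟨P, hP, hcover⟩ := exists_maximal_ballPacking hb hR
  have hκR : 1 / 2 ^ K * R ≤ R / 2 := by linarith [mul_le_mul_of_nonneg_right hκ hR.le]
  have hlarge := hdirichlet R hR (hR_le.le.trans (min_le_right _ _)) P hcover
    (hP.perforate_nonempty hne hR.le (by linarith))
  obtain ⟨r, ⟨hr, hr_le⟩, hmem⟩ := hP.exists_dEig1_perforate_mem_Icc hΩ hne hb (by positivity) hκR
    ha (lt_add_of_pos_right a hδ) (by linarith)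
  have hrR : r ≤ R / 2 ^ K := by rwa [one_div_mul_eq_div] at hr_le
  exact ⟨P, r, R, hP, hr, by linarith,
    (hP.volumeReal_holes_le_of_le_div_two_pow hb hr.le hR hrR).trans hvolume, hmem,
    hneumann P r R hP (hR_le.le.trans (min_le_left _ _)) hr hrR⟩

lemma mem_closure_perforationTriples (hΩ : IsOpen Ω) (hne : Ω.Nonempty)
    (hb : Bornology.IsBounded Ω) {a : ℝ} (ha : dEig1 Ω ≤ a) :
    (volume.real Ω, a, nEig1 Ω) ∈ closure (perforationTriples Ω) := by
  refine Metric.mem_closure_iff.2 fun ε hε => ?_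
  obtain ⟨η, hη, hupper⟩ := exists_nEig1_le_of_removal hΩ hne hb (half_pos hε)
  obtain ⟨P, r, R, hP, hr, hrR, hholes, ⟨hle_dEig1, hdEig1_le⟩, hlower⟩ :=
    exists_ballPacking_dEig1_nEig1_close hΩ hne hb ha (half_pos hε) (lt_min hη (half_pos hε))
  refine ⟨_, ⟨P, r, R, hP, hr, hrR, rfl⟩, ?_⟩
  have hsub := perforate_subset Ω P r
  have hopen := isOpen_perforate hΩ P r
  have hupper := hupper _ hopen hsub (hholes.trans (min_le_left _ _))
  have hvolume : volume.real (Ω \ perforate Ω P r) =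
      volume.real Ω - volume.real (perforate Ω P r) :=
    measureReal_sdiff hsub hopen.measurableSet hb.measure_lt_top.ne
  have hvolume_le := hholes.trans (min_le_right _ _)
  have hvolume_nonneg : 0 ≤ volume.real (Ω \ perforate Ω P r) := measureReal_nonneg
  simp only [Prod.dist_eq, Real.dist_eq, max_lt_iff, abs_lt]
  refine ⟨⟨?_, ?_⟩, ⟨?_, ?_⟩, ?_, ?_⟩ <;> linarith

end Closure

/-- If `(x₀, y₀)` belongs to the diagram `𝓔`, then the whole horizontal half-line
`{(x, y₀) : x ≥ x₀}` is contained in the closure of `𝓔`. -/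
theorem halfline_in_closure (x₀ y₀ : ℝ) (h : (x₀, y₀) ∈ diagE) :
    { p : ℝ × ℝ | p.2 = y₀ ∧ x₀ ≤ p.1 } ⊆ closure diagE := by
  obtain ⟨Ω, hne, hΩ, hb, hcone, hcoords⟩ := h
  obtain ⟨rfl, rfl⟩ := Prod.mk.inj hcoords
  rintro ⟨x, y⟩ ⟨rfl : y = _, hx : _ ≤ x⟩
  have hV : 0 < volume.real Ω := volumeReal_pos_of_isOpen hΩ hne hb
  have htriple : (volume.real Ω, x / volume.real Ω, nEig1 Ω) ∈ closure (perforationTriples Ω) :=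
    mem_closure_perforationTriples hΩ hne hb ((le_div_iff₀' hV).2 hx)
  have hmaps : MapsTo (fun q : ℝ × ℝ × ℝ => (q.1 * q.2.1, q.1 * q.2.2))
      (perforationTriples Ω) diagE := by
    rintro _ ⟨P, r, R, hP, hr, hrR, rfl⟩
    have hne' := hP.perforate_nonempty hne (hr.trans hrR).le hrR
    exact hP.perforate_mem_diagE hΩ hb hne' hcone hr hrR
  have hclosure := map_mem_closure (by fun_prop) htriple hmaps
  rwa [mul_div_cancel₀ _ hV.ne'] at hclosure
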